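/- arXiv:1810.12493 — 3 statements merged into one kernel-verified Lean document; each statement's English description precedes it below -/
import Mathlib

section
/- There exist constants C > 0 and N₀ such that for all integers N ≥ N₀ and all integers ℓ with √N·(log N)² < |ℓ| ≤ N/2, the count V_d(ℓ, N + |ℓ|(|ℓ|+1)/2) satisfies |V_d(ℓ, N + |ℓ|(|ℓ|+1)/2) − p(N)| ≤ C·p(N)·N^{−√(log N)}; that is, V_d(ℓ, N + |ℓ|(|ℓ|+1)/2) = p(N)·(1 + O(N^{−√(log N)})) uniformly in this range of ℓ. -/
open scoped BigOperators

/-- `IsSCC n l k` says that the list `l = (a_1, ..., a_s)` of nonnegative integers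
is a strongly concave composition of `n` with central part at (1-indexed) position `k`:
`a_1 > a_2 > ... > a_{k-1} > a_k < a_{k+1} < ... < a_s` and `a_1 + ... + a_s = n`. -/
def IsSCC (n : ℕ) (l : List ℕ) (k : ℕ) : Prop :=
  1 ≤ k ∧ k ≤ l.length ∧ l.sum = n ∧
  (∀ i j : Fin l.length, (i : ℕ) < j → (j : ℕ) < k → l.get j < l.get i) ∧
  (∀ i j : Fin l.length, k - 1 ≤ (i : ℕ) → (i : ℕ) < j → l.get i < l.get j)

/-- The rank `s - 2k + 1` of a strongly concave composition with `s` parts and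
central part at position `k`. -/
def sccRank (l : List ℕ) (k : ℕ) : ℤ := (l.length : ℤ) - 2 * k + 1

/-- `Vd m n` is the number of strongly concave compositions of `n` with rank `m`. -/
noncomputable def Vd (m : ℤ) (n : ℕ) : ℕ :=
  Set.ncard {p : List ℕ × ℕ | IsSCC n p.1 p.2 ∧ sccRank p.1 p.2 = m}

/-- `VdTotal n` is the total number of strongly concave compositions of `n`. -/
noncomputable def VdTotal (n : ℕ) : ℕ :=
  Set.ncard {p : List ℕ × ℕ | IsSCC n p.1 p.2}

/-- The partition function, extended by `0` to negative integers. -/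
def partitionCount (k : ℤ) : ℕ :=
  if 0 ≤ k then Fintype.card (Nat.Partition k.toNat) else 0


lemma sum_mapIdx_add (l : List ℕ) :
    (l.mapIdx (fun i a => a + i)).sum = l.sum + ∑ i ∈ Finset.range l.length, i := by
  induction l using List.reverseRecOn with
  | nil => simp
  | append_singleton l a ih =>
    rw [List.mapIdx_concat]
    simp [ih, Finset.sum_range_succ]
    omega

lemma strict_gap (l : List ℕ) (h : l.Pairwise (· < ·)) (i d : ℕ) (hj : i + d < l.length) :
    l[i]'(by omega) + d ≤ l[i+d] := by
  induction d with
  | zero => simp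
  | succ d ih =>
    have h1 := ih (by omega)
    have h2 := List.pairwise_iff_getElem.mp h (i+d) (i+d+1) (by omega) (by omega) (by omega)
    simp only [← add_assoc]
    omega

lemma strict_ge (l : List ℕ) (h : l.Pairwise (· < ·)) (i : ℕ) (hj : i < l.length) :
    i ≤ l[i] := by
  have := strict_gap l h 0 i (by omega)
  simp at this
  omega

lemma down_pairwise (l : List ℕ) (h : l.Pairwise (· < ·)) :
    (l.mapIdx (fun i a => a - i)).Pairwise (· ≤ ·) := by
  rw [List.pairwise_iff_getElem]
  intro i j hi hj hij
  simp only [List.length_mapIdx] at hi hj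
  have h1 := strict_gap l h i (j-i) (by omega)
  have h2 := strict_ge l h i (by omega)
  simp only [List.getElem_mapIdx]
  have : i + (j - i) = j := by omega
  simp only [this] at h1
  omega

lemma up_pairwise (l : List ℕ) (h : l.Pairwise (· ≤ ·)) :
    (l.mapIdx (fun i a => a + i)).Pairwise (· < ·) := by
  rw [List.pairwise_iff_getElem]
  intro i j hi hj hij
  simp only [List.length_mapIdx] at hi hj
  have h2 := List.pairwise_iff_getElem.mp h i j hi hj hij
  simp only [List.getElem_mapIdx]
  omega

lemma up_down (l : List ℕ) (h : l.Pairwise (· < ·)) :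
    (l.mapIdx (fun i a => a - i)).mapIdx (fun i a => a + i) = l := by
  apply List.ext_getElem (by simp)
  intro i h1 h2
  simp only [List.getElem_mapIdx]
  have := strict_ge l h i h2
  omega

lemma down_up (l : List ℕ) :
    (l.mapIdx (fun i a => a + i)).mapIdx (fun i a => a - i) = l := by
  apply List.ext_getElem (by simp)
  intro i h1 h2
  simp only [List.getElem_mapIdx]
  omega

lemma sort_coe_sorted (l : List ℕ) (h : l.Pairwise (· ≤ ·)) :
    (l : Multiset ℕ).sort (· ≤ ·) = l := by
  rw [Multiset.coe_sort]
  exact List.mergeSort_of_pairwise (by simpa using h)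

lemma finset_sort_lt (S : Finset ℕ) : (S.sort (· ≤ ·)).Pairwise (· < ·) :=
  (Finset.sortedLT_sort S).pairwise

lemma finset_sort_sum (S : Finset ℕ) : (S.sort (· ≤ ·)).sum = ∑ x ∈ S, x := by
  have : ((S.sort (· ≤ ·) : List ℕ) : Multiset ℕ).sum = ∑ x ∈ S, x := by
    rw [Finset.sort_eq]; exact Finset.sum_val S
  rw [← this, Multiset.sum_coe]

lemma toFinset_sum (l : List ℕ) (h : l.Nodup) : ∑ x ∈ l.toFinset, x = l.sum := by
  rw [List.sum_toFinset _ h]; simp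

lemma lt_nodup (l : List ℕ) (h : l.Pairwise (· < ·)) : l.Nodup :=
  List.Pairwise.imp (fun h => ne_of_lt h) h

def E1 (k m : ℕ) :
    {S : Finset ℕ // S.card = k ∧ ∑ x ∈ S, x = m + ∑ i ∈ Finset.range k, i} ≃
    {M : Multiset ℕ // M.card = k ∧ M.sum = m} where
  toFun S := ⟨((S.1.sort (· ≤ ·)).mapIdx (fun i a => a - i) : List ℕ), by
    obtain ⟨S, h1, h2⟩ := S
    refine ⟨by simp [h1], ?_⟩
    have h3 := sum_mapIdx_add ((S.sort (· ≤ ·)).mapIdx (fun i a => a - i))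
    rw [up_down _ (finset_sort_lt S), finset_sort_sum, h2] at h3
    simp [h1] at h3
    simp [h3]⟩
  invFun M := ⟨((M.1.sort (· ≤ ·)).mapIdx (fun i a => a + i)).toFinset, by
    obtain ⟨M, h1, h2⟩ := M
    have hp := up_pairwise _ (Multiset.pairwise_sort M (· ≤ ·))
    refine ⟨?_, ?_⟩
    · rw [List.toFinset_card_of_nodup (lt_nodup _ hp)]; simp [h1]
    · rw [toFinset_sum _ (lt_nodup _ hp), sum_mapIdx_add, Multiset.length_sort, h1]
      have : ((M.sort (· ≤ ·) : List ℕ) : Multiset ℕ).sum = m := by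
        rw [Multiset.sort_eq]; exact h2
      rw [Multiset.sum_coe] at this
      rw [this]⟩
  left_inv S := by
    apply Subtype.ext
    simp only
    rw [sort_coe_sorted _ (down_pairwise _ (finset_sort_lt _)), up_down _ (finset_sort_lt _),
      Finset.sort_toFinset]
  right_inv M := by
    apply Subtype.ext
    have hp := up_pairwise _ (Multiset.pairwise_sort M.1 (· ≤ ·))
    simp only
    rw [(List.toFinset_sort (· ≤ ·) (lt_nodup _ hp)).mpr (hp.imp le_of_lt), down_up, Multiset.sort_eq]

def E2 (k m : ℕ) (hk : m ≤ k) :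
    {M : Multiset ℕ // M.card = k ∧ M.sum = m} ≃ Nat.Partition m where
  toFun M := Nat.Partition.ofSums m M.1 M.2.2
  invFun P := ⟨P.parts + Multiset.replicate (k - P.parts.card) 0, by
    have : P.parts.card ≤ m := by
      conv_rhs => rw [← P.parts_sum]
      have := Multiset.card_nsmul_le_sum (s := P.parts) (a := 1) (fun x hx => P.parts_pos hx)
      simpa using this
    refine ⟨by simp; omega, by simp [P.parts_sum]⟩⟩
  left_inv M := by
    obtain ⟨M, h1, h2⟩ := M
    apply Subtype.ext
    simp only [Nat.Partition.ofSums]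
    have h3 := Multiset.filter_add_not (fun x => x ≠ 0) M
    conv_rhs => rw [← h3]
    congr 1
    rw [eq_comm, Multiset.eq_replicate]
    constructor
    · have := congrArg Multiset.card h3
      rw [Multiset.card_add] at this
      omega
    · simp
  right_inv P := by
    apply Nat.Partition.ext
    simp only [Nat.Partition.ofSums, Multiset.filter_add]
    rw [Multiset.filter_eq_self.mpr, Multiset.filter_eq_nil.mpr]
    · simp
    · intro a ha; simpa using Multiset.eq_of_mem_replicate ha
    · intro a ha; exact (P.parts_pos ha).ne'

lemma range_sum_le (S : Finset ℕ) : ∑ i ∈ Finset.range S.card, i ≤ ∑ x ∈ S, x := by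
  have h3 := sum_mapIdx_add ((S.sort (· ≤ ·)).mapIdx (fun i a => a - i))
  rw [up_down _ (finset_sort_lt S), finset_sort_sum, List.length_mapIdx, Finset.length_sort] at h3
  omega

/-- reflected complement -/
def rc (n : ℕ) (A : Finset ℕ) : Finset ℕ := (Finset.range (n+1)).filter (fun x => n - x ∉ A)

lemma rc_card_sum (n : ℕ) (A : Finset ℕ) (hA : ∀ a ∈ A, a ≤ n) :
    (rc n A).card + A.card = n + 1 ∧
    ∑ x ∈ rc n A, x + n * A.card = ∑ x ∈ A, x + ∑ x ∈ Finset.range (n+1), x := by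
  have hinj : Set.InjOn (fun x => n - x) (A : Set ℕ) := by
    intro x hx y hy h
    have h1 := hA x hx
    have h2 := hA y hy
    simp only at h
    omega
  have him : (Finset.range (n+1)).filter (fun x => ¬ (n - x ∉ A)) = A.image (fun x => n - x) := by
    ext x
    simp only [Finset.mem_filter, Finset.mem_range, not_not, Finset.mem_image]
    constructor
    · rintro ⟨h1, h2⟩; exact ⟨_, h2, by omega⟩
    · rintro ⟨a, ha, rfl⟩
      have := hA a ha
      refine ⟨by omega, ?_⟩
      rwa [show n - (n - a) = a by omega]
  have hc := Finset.card_filter_add_card_filter_not (s := Finset.range (n+1)) (fun x => n - x ∉ A)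
  have hs := Finset.sum_filter_add_sum_filter_not (Finset.range (n+1)) (fun x => n - x ∉ A) (fun x => x)
  rw [him] at hc hs
  rw [Finset.card_image_of_injOn hinj, Finset.card_range] at hc
  rw [Finset.sum_image hinj] at hs
  have h5 : ∑ x ∈ A, (n - x) + ∑ x ∈ A, x = n * A.card := by
    rw [← Finset.sum_add_distrib, mul_comm, ← smul_eq_mul, ← Finset.sum_const]
    apply Finset.sum_congr rfl
    intro x hx
    have := hA x hx
    omega
  unfold rc
  omega

lemma rc_le (n : ℕ) (A : Finset ℕ) : ∀ a ∈ rc n A, a ≤ n := by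
  intro a ha
  simp only [rc, Finset.mem_filter, Finset.mem_range] at ha
  omega

lemma mem_rc {n : ℕ} {A : Finset ℕ} {x : ℕ} : x ∈ rc n A ↔ x ≤ n ∧ n - x ∉ A := by
  simp [rc]

lemma le_sum_self {A : Finset ℕ} {a : ℕ} (ha : a ∈ A) : a ≤ ∑ x ∈ A, x :=
  Finset.single_le_sum (f := fun x => x) (fun _ _ => Nat.zero_le _) ha

def Pr (l n : ℕ) : Set (Finset ℕ × Finset ℕ) :=
  {p | 0 ∉ p.2 ∧ ∑ x ∈ p.1, x + ∑ x ∈ p.2, x = n ∧ p.2.card = p.1.card + l}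

def E3 (l n : ℕ) : Pr l n ≃
    {S : Finset ℕ // S.card = n + 1 + l ∧ ∑ x ∈ S, x = n + n * l + ∑ x ∈ Finset.range (n+1), x} where
  toFun p := ⟨rc n p.1.1 ∪ p.1.2.map (addRightEmbedding n), by
    obtain ⟨⟨A, B⟩, h0, hs, hc⟩ := p
    simp only at h0 hs hc ⊢
    have hA : ∀ a ∈ A, a ≤ n := fun a ha => by have := le_sum_self ha; omega
    obtain ⟨h1, h2⟩ := rc_card_sum n A hA
    have hd : Disjoint (rc n A) (B.map (addRightEmbedding n)) := by
      rw [Finset.disjoint_left]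
      intro x hx hx'
      have := rc_le _ _ _ hx
      simp only [Finset.mem_map, addRightEmbedding_apply] at hx'
      obtain ⟨b, hb, rfl⟩ := hx'
      have : b ≠ 0 := fun h => h0 (h ▸ hb)
      omega
    rw [Finset.card_union_of_disjoint hd, Finset.sum_union hd, Finset.card_map, Finset.sum_map]
    simp only [addRightEmbedding_apply]
    rw [Finset.sum_add_distrib, Finset.sum_const, smul_eq_mul]
    refine ⟨by omega, ?_⟩
    rw [hc]
    linarith⟩
  invFun S := ⟨(rc n S.1, (S.1.filter (n < ·)).image (· - n)), by
    obtain ⟨S, hc, hs⟩ := S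
    have hrc : rc n S = rc n (S.filter (¬ n < ·)) := by
      ext x
      simp only [mem_rc, Finset.mem_filter]
      constructor
      · rintro ⟨h1, h2⟩; exact ⟨h1, fun h => h2 h.1⟩
      · rintro ⟨h1, h2⟩; exact ⟨h1, fun h => h2 ⟨h, by omega⟩⟩
    have hinj : Set.InjOn (fun x => x - n) ((S.filter (n < ·) : Finset ℕ) : Set ℕ) := by
      intro x hx y hy h
      simp at hx hy h
      omega
    obtain ⟨h1, h2⟩ := rc_card_sum n (S.filter (¬ n < ·)) (by simp)
    have h3 := Finset.card_filter_add_card_filter_not (s := S) (n < ·)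
    have h4 := Finset.sum_filter_add_sum_filter_not S (n < ·) (fun x => x)
    have h5 : ∑ x ∈ S.filter (n < ·), (x - n) + n * (S.filter (n < ·)).card
        = ∑ x ∈ S.filter (n < ·), x := by
      rw [mul_comm, ← smul_eq_mul, ← Finset.sum_const, ← Finset.sum_add_distrib]
      apply Finset.sum_congr rfl
      intro x hx
      simp at hx
      omega
    have h6 := Finset.sum_range_id_mul_two (n+1)
    simp only [Pr, Set.mem_ofPred_eq, hrc]
    rw [Finset.card_image_of_injOn hinj, Finset.sum_image hinj]
    refine ⟨?_, ?_, by omega⟩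
    · simp only [Finset.mem_image, Finset.mem_filter, not_exists, not_and]
      intro x hx; omega
    · simp only [Nat.add_sub_cancel] at h6
      have h7 : n * (S.filter (n < ·)).card + n * (S.filter (¬ n < ·)).card = n * (n+1+l) := by
        rw [← mul_add, h3, hc]
      nlinarith⟩
  left_inv p := by
    obtain ⟨⟨A, B⟩, h0, hs, hc⟩ := p
    simp only at h0 hs hc
    have hA : ∀ a ∈ A, a ≤ n := fun a ha => by have := le_sum_self ha; omega
    apply Subtype.ext
    simp only
    apply Prod.ext
    · ext x
      simp only [mem_rc, Finset.mem_union, Finset.mem_map, addRightEmbedding_apply, not_or, not_and,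
        not_not, not_exists]
      constructor
      · rintro ⟨h1, h2, h3⟩
        have := h2 (by omega)
        rwa [show n - (n - x) = x by omega] at this
      · intro h
        have := hA x h
        refine ⟨this, fun _ => by rwa [show n - (n - x) = x by omega], ?_⟩
        intro b hb hb'
        have : b ≠ 0 := fun h => h0 (h ▸ hb)
        omega
    · ext x
      simp only [Finset.mem_image, Finset.mem_filter, Finset.mem_union, mem_rc, Finset.mem_map,
        addRightEmbedding_apply]
      constructor
      · rintro ⟨y, ⟨h1 | ⟨b, hb, rfl⟩, h2⟩, rfl⟩
        · omega
        · simpa using hb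
      · intro hx
        have : x ≠ 0 := fun h => h0 (h ▸ hx)
        exact ⟨x + n, ⟨Or.inr ⟨x, hx, rfl⟩, by omega⟩, by omega⟩
  right_inv S := by
    apply Subtype.ext
    ext x
    simp only [Finset.mem_image, Finset.mem_filter, Finset.mem_union, mem_rc, Finset.mem_map,
        addRightEmbedding_apply]
    constructor
    · rintro (⟨h1, h2⟩ | ⟨b, ⟨y, ⟨h1, h2⟩, rfl⟩, rfl⟩)
      · have := not_and_not_right.mp h2 (by omega)
        rwa [show n - (n - x) = x by omega] at this
      · rwa [show y - n + n = y by omega]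
    · intro h
      by_cases hx : n < x
      · exact Or.inr ⟨x - n, ⟨x, ⟨h, hx⟩, rfl⟩, by omega⟩
      · exact Or.inl ⟨by omega, fun h' => h'.2 (by rwa [show n - (n - x) = x by omega])⟩

def pc (n : ℕ) : ℕ := Fintype.card (Nat.Partition n)

lemma Pr_card (l N : ℕ) : (Pr l (N + l * (l+1) / 2)).ncard = pc N := by
  have h2 : l * (l+1) / 2 * 2 = l * (l+1) := Nat.div_mul_cancel (Nat.even_mul_succ_self l).two_dvd
  generalize l * (l+1) / 2 = t at h2
  have h6 := Finset.sum_range_id_mul_two (N+t+1)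
  have h7 := Finset.sum_range_id_mul_two (N+t+1+l)
  simp only [Nat.add_sub_cancel, show N+t+1+l-1 = N+t+l by omega] at h6 h7
  have hE : (N + t) + (N+t) * l + ∑ x ∈ Finset.range (N+t+1), x =
      N + ∑ x ∈ Finset.range (N+t+1+l), x := by nlinarith
  have e := E3 l (N + t)
  rw [hE] at e
  have e' := (e.trans (E1 (N+t+1+l) N)).trans (E2 _ _ (by omega))
  rw [← Nat.card_coe_set_eq, Nat.card_congr e', Nat.card_eq_fintype_card, pc]

lemma Pr_empty (l n : ℕ) (h : n < l * (l+1) / 2) : Pr l n = ∅ := by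
  have h2 : l * (l+1) / 2 * 2 = l * (l+1) := Nat.div_mul_cancel (Nat.even_mul_succ_self l).two_dvd
  generalize l * (l+1) / 2 = t at h2 h
  by_contra hne
  obtain ⟨p, hp⟩ := Set.nonempty_iff_ne_empty.mpr hne
  obtain ⟨S, hS1, hS2⟩ := E3 l n ⟨p, hp⟩
  have h3 := range_sum_le S
  rw [hS1, hS2] at h3
  have h6 := Finset.sum_range_id_mul_two (n+1)
  have h7 := Finset.sum_range_id_mul_two (n+1+l)
  simp only [Nat.add_sub_cancel, show n+1+l-1 = n+l by omega] at h6 h7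
  nlinarith

lemma Pr_finite (l n : ℕ) : (Pr l n).Finite := by
  apply Set.Finite.subset (((Finset.range (n+1)).powerset ×ˢ (Finset.range (n+1)).powerset).finite_toSet)
  rintro ⟨A, B⟩ ⟨h0, hs, hc⟩
  simp only [Finset.coe_product, Set.mem_prod, Finset.mem_coe, Finset.mem_powerset] at hs ⊢
  constructor <;> intro x hx <;> have := le_sum_self hx <;> simp <;> omega

lemma pc_mono_succ (n : ℕ) : pc n ≤ pc (n+1) := by
  refine Fintype.card_le_of_injective (fun P : Nat.Partition n =>
    (⟨1 ::ₘ P.parts, ?_, ?_⟩ : Nat.Partition (n+1))) ?_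
  · intro i hi
    rcases Multiset.mem_cons.mp hi with rfl | h
    · exact one_pos
    · exact P.parts_pos h
  · simp [P.parts_sum, add_comm]
  · intro P Q h
    simp only [Nat.Partition.mk.injEq, Multiset.cons_inj_right] at h
    exact Nat.Partition.ext h

lemma pc_mono : Monotone pc := monotone_nat_of_le_succ pc_mono_succ

/-- key doubling bound -/
lemma pc_mul (n m D : ℕ) (hD : 2 * (n + m) < (D + 1) * D) : m * pc n ≤ D * pc (n + m) := by
  classical
  have hf : ∀ (P : Nat.Partition n) (k : ℕ), k ∈ Finset.Icc 1 m →
      (∀ {i}, i ∈ k ::ₘ (P.parts + Multiset.replicate (m - k) 1) → 0 < i) ∧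
      (k ::ₘ (P.parts + Multiset.replicate (m - k) 1)).sum = n + m := by
    intro P k hk
    rw [Finset.mem_Icc] at hk
    constructor
    · intro i hi
      simp only [Multiset.mem_cons, Multiset.mem_add] at hi
      rcases hi with rfl | h | h
      · omega
      · exact P.parts_pos h
      · rw [Multiset.eq_of_mem_replicate h]; exact one_pos
    · simp [P.parts_sum]; omega
  have key := Finset.card_le_card_of_injOn
    (s := (Finset.univ : Finset (Nat.Partition n)) ×ˢ Finset.Icc 1 m)
    (t := (Finset.univ : Finset (Nat.Partition (n+m))).sigma (fun Q => Q.parts.toFinset))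
    (fun x => if h : x.2 ∈ Finset.Icc 1 m then
      ⟨⟨x.2 ::ₘ (x.1.parts + Multiset.replicate (m - x.2) 1), (hf x.1 x.2 h).1, (hf x.1 x.2 h).2⟩, x.2⟩
      else ⟨Nat.Partition.indiscrete _, 0⟩) ?_ ?_
  · rw [Finset.card_product, Finset.card_sigma, Nat.card_Icc, Finset.card_univ] at key
    have h2 : ∑ Q : Nat.Partition (n+m), Q.parts.toFinset.card ≤ ∑ Q : Nat.Partition (n+m), D := by
      apply Finset.sum_le_sum
      intro Q _
      by_contra hlt
      push Not at hlt
      have h1 := range_sum_le Q.parts.toFinset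
      have h3 : ∑ x ∈ Q.parts.toFinset, x ≤ n + m := by
        refine le_trans ?_ Q.parts_sum.le
        rw [show ∑ x ∈ Q.parts.toFinset, x = Q.parts.toFinset.val.sum from (Finset.sum_val _).symm,
          Multiset.toFinset_val]
        obtain ⟨u, hu⟩ := Multiset.le_iff_exists_add.mp (Multiset.dedup_le Q.parts)
        have h9 := congrArg Multiset.sum hu
        rw [Multiset.sum_add] at h9
        omega
      have h4 : ∑ i ∈ Finset.range (D+1), i ≤ ∑ i ∈ Finset.range Q.parts.toFinset.card, i :=
        Finset.sum_le_sum_of_subset (by intro x; simp; omega)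
      have h5 := Finset.sum_range_id_mul_two (D+1)
      simp only [Nat.add_sub_cancel] at h5
      omega
    simp only [Finset.sum_const, Finset.card_univ, smul_eq_mul, Nat.add_sub_cancel] at h2 key
    unfold pc
    linarith
  · rintro ⟨P, k⟩ hx
    simp only [Finset.coe_product, Set.mem_prod, Finset.mem_coe] at hx
    simp only [hx.2, dite_true, Finset.coe_sigma]
    simp
  · rintro ⟨P, k⟩ hx ⟨P', k'⟩ hx' h
    simp only [Finset.coe_product, Set.mem_prod, Finset.mem_coe] at hx hx'
    simp only [hx.2, hx'.2, dite_true, Sigma.mk.injEq, heq_eq_eq, Nat.Partition.mk.injEq] at h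
    obtain ⟨h1, rfl⟩ := h
    simp only [Multiset.cons_inj_right, add_left_inj] at h1
    rw [Nat.Partition.ext h1]

def Ts (m : ℤ) (n : ℕ) : Set (ℕ × Finset ℕ × Finset ℕ) :=
  {t | (∀ a ∈ t.2.1, t.1 < a) ∧ (∀ b ∈ t.2.2, t.1 < b) ∧
    t.1 + ∑ x ∈ t.2.1, x + ∑ x ∈ t.2.2, x = n ∧ (t.2.2.card : ℤ) - t.2.1.card = m}

def phi (t : ℕ × Finset ℕ × Finset ℕ) : List ℕ × ℕ :=
  (t.2.1.sort (· ≥ ·) ++ t.1 :: t.2.2.sort (· ≤ ·), t.2.1.card + 1)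

lemma phi_inj : Function.Injective phi := by
  rintro ⟨c, A, B⟩ ⟨c', A', B'⟩ h
  simp only [phi, Prod.mk.injEq] at h
  obtain ⟨h1, h2⟩ := h
  obtain ⟨h3, h4⟩ := List.append_inj h1 (by simp; omega)
  simp only [List.cons.injEq] at h4
  have hA := congrArg List.toFinset h3
  have hB := congrArg List.toFinset h4.2
  simp only [Finset.sort_toFinset] at hA hB
  rw [h4.1, hA, hB]

lemma isSCC_iff (n : ℕ) (L R : List ℕ) (c : ℕ) :
    IsSCC n (L ++ c :: R) (L.length + 1) ↔
      (L.sum + (c + R.sum) = n ∧ (L ++ [c]).Pairwise (· > ·) ∧ (c :: R).Pairwise (· < ·)) := by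
  unfold IsSCC
  rw [List.pairwise_iff_getElem, List.pairwise_iff_getElem]
  simp only [List.sum_append, List.sum_cons, List.get_eq_getElem]
  constructor
  · rintro ⟨-, -, hs, h1, h2⟩
    refine ⟨hs, ?_, ?_⟩
    · intro i j hi hj hij
      simp only [List.length_append, List.length_cons, List.length_nil] at hi hj
      have := h1 ⟨i, by simp; omega⟩ ⟨j, by simp; omega⟩ hij (by simp; omega)
      simp only [List.getElem_append] at this ⊢
      grind
    · intro i j hi hj hij
      simp only [List.length_cons] at hi hj
      have := h2 ⟨L.length + i, by simp; omega⟩ ⟨L.length + j, by simp; omega⟩ (by simp) (by simp; omega)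
      simpa using this
  · rintro ⟨hs, h1, h2⟩
    refine ⟨by omega, by simp, hs, ?_, ?_⟩
    · rintro ⟨i, hi⟩ ⟨j, hj⟩ hij hjk
      simp only at hij hjk
      have := h1 i j (by simp; omega) (by simp; omega) hij
      simp only [List.getElem_append] at this ⊢
      grind
    · rintro ⟨i, hi⟩ ⟨j, hj⟩ hik hij
      simp only [List.length_append, List.length_cons] at hij hik hi hj
      have := h2 (i - L.length) (j - L.length) (by simp; omega) (by simp; omega) (by omega)
      simp only
      rw [List.getElem_append_right (by omega), List.getElem_append_right (by omega)]
      exact this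

lemma finset_sort_ge_sum (S : Finset ℕ) : (S.sort (· ≥ ·)).sum = ∑ x ∈ S, x := by
  have : ((S.sort (· ≥ ·) : List ℕ) : Multiset ℕ).sum = ∑ x ∈ S, x := by
    rw [Finset.sort_eq]; exact Finset.sum_val S
  rw [← this, Multiset.sum_coe]

lemma gt_nodup (l : List ℕ) (h : l.Pairwise (· > ·)) : l.Nodup :=
  List.Pairwise.imp (fun h => ne_of_gt h) h

lemma phi_image (m : ℤ) (n : ℕ) :
    {p : List ℕ × ℕ | IsSCC n p.1 p.2 ∧ sccRank p.1 p.2 = m} = phi '' Ts m n := by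
  ext ⟨l, k⟩
  simp only [Set.mem_ofPred_eq, Set.mem_image]
  constructor
  · rintro ⟨h, hr⟩
    have hk1 := h.1
    have hk2 := h.2.1
    have hl : l = l.take (k-1) ++ l[k-1]'(by omega) :: l.drop k := by
      conv_lhs => rw [← List.take_append_drop (k-1) l]
      rw [List.drop_eq_getElem_cons (by omega)]
      rw [show k - 1 + 1 = k by omega]
    have hlen : (l.take (k-1)).length + 1 = k := by rw [List.length_take]; omega
    generalize l.take (k-1) = L at hl hlen
    generalize l[k-1]'(by omega) = c at hl
    generalize l.drop k = R at hl
    subst hl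
    subst hlen
    rw [isSCC_iff] at h
    obtain ⟨hs, h1, h2⟩ := h
    rw [List.pairwise_append] at h1
    rw [List.pairwise_cons] at h2
    have nL := gt_nodup _ h1.1
    have nR := lt_nodup _ h2.2
    refine ⟨(c, L.toFinset, R.toFinset), ⟨?_, ?_, ?_, ?_⟩, ?_⟩
    · intro a ha
      exact h1.2.2 a (by simpa using ha) c (by simp)
    · intro b hb
      exact h2.1 b (by simpa using hb)
    · simp only [toFinset_sum _ nL, toFinset_sum _ nR]; omega
    · simp only [List.toFinset_card_of_nodup nL, List.toFinset_card_of_nodup nR]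
      simp only [sccRank, List.length_append, List.length_cons] at hr
      push_cast at hr
      omega
    · simp only [phi]
      rw [(List.toFinset_sort (· ≤ ·) nR).mpr (h2.2.imp le_of_lt),
        (List.toFinset_sort (· ≥ ·) nL).mpr (h1.1.imp le_of_lt), List.toFinset_card_of_nodup nL]
  · rintro ⟨⟨c, A, B⟩, ⟨h1, h2, h3, h4⟩, h5⟩
    simp only [phi, Prod.mk.injEq] at h5 h1 h2 h3 h4
    obtain ⟨rfl, rfl⟩ := h5
    constructor
    · have := (isSCC_iff n (A.sort (· ≥ ·)) (B.sort (· ≤ ·)) c).mpr ⟨?_, ?_, ?_⟩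
      · simpa using this
      · rw [finset_sort_sum, finset_sort_ge_sum]; omega
      · rw [List.pairwise_append]
        refine ⟨(Finset.sortedGT_sort A).pairwise, by simp, ?_⟩
        intro a ha b hb
        simp at ha hb
        subst hb
        exact h1 a ha
      · rw [List.pairwise_cons]
        exact ⟨fun b hb => h2 b (by simpa using hb), finset_sort_lt B⟩
    · simp [sccRank]
      omega

lemma Vd_eq (m : ℤ) (n : ℕ) : Vd m n = (Ts m n).ncard := by
  rw [Vd, phi_image, Set.ncard_image_of_injective _ phi_inj]

lemma Ts_neg (m : ℤ) (n : ℕ) : (Ts (-m) n).ncard = (Ts m n).ncard := by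
  have : Ts (-m) n = (fun t : ℕ × Finset ℕ × Finset ℕ => (t.1, t.2.2, t.2.1)) '' Ts m n := by
    ext ⟨c, A, B⟩
    simp only [Set.mem_image]
    constructor
    · rintro ⟨h1, h2, h3, h4⟩
      exact ⟨(c, B, A), ⟨h2, h1, by simp only at *; omega, by simp only at *; omega⟩, rfl⟩
    · rintro ⟨⟨c', A', B'⟩, ⟨h1, h2, h3, h4⟩, h⟩
      simp only [Prod.mk.injEq] at h
      obtain ⟨rfl, rfl, rfl⟩ := h
      exact ⟨h2, h1, by simp only at *; omega, by simp only at *; omega⟩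
  rw [this, Set.ncard_image_of_injective]
  rintro ⟨c, A, B⟩ ⟨c', A', B'⟩ h
  simp only [Prod.mk.injEq] at h ⊢
  tauto

lemma Vd_natAbs (m : ℤ) (n : ℕ) : Vd m n = (Ts (m.natAbs : ℤ) n).ncard := by
  rw [Vd_eq]
  rcases Int.natAbs_eq m with h | h
  · rw [← h]
  · conv_lhs => rw [h]
    rw [Ts_neg]

lemma Ts_finite (m : ℤ) (n : ℕ) : (Ts m n).Finite := by
  apply Set.Finite.subset ((Finset.range (n+1) ×ˢ
    ((Finset.range (n+1)).powerset ×ˢ (Finset.range (n+1)).powerset)).finite_toSet)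
  rintro ⟨c, A, B⟩ ⟨h1, h2, h3, h4⟩
  simp only [Finset.coe_product, Set.mem_prod, Finset.mem_coe, Finset.mem_powerset,
    Finset.mem_range] at h3 ⊢
  refine ⟨by omega, ?_, ?_⟩ <;> intro x hx <;> have := le_sum_self hx <;> simp <;> omega

lemma tri_succ (l : ℕ) : (l+1) * (l+1+1) / 2 = l * (l+1) / 2 + (l+1) := by
  rw [show (l+1) * (l+1+1) = l * (l+1) + (l+1) * 2 by ring]
  exact Nat.add_mul_div_right _ _ (by norm_num)

lemma Ts_lower (l N : ℕ) (hl : l + 1 ≤ N) :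
    pc N ≤ (Ts (l : ℤ) (N + l * (l+1)/2)).ncard + pc (N - (l+1)) := by
  have hP := Pr_card (l+1) (N - (l+1))
  rw [tri_succ, show N - (l+1) + (l * (l+1) / 2 + (l+1)) = N + l * (l+1)/2 by omega] at hP
  rw [← hP, ← Pr_card l N]
  generalize N + l * (l+1)/2 = n
  have hsplit : Pr l n = (Pr l n ∩ {p | 0 ∉ p.1}) ∪ (Pr l n ∩ {p | 0 ∈ p.1}) := by
    ext p
    simp only [Set.mem_union, Set.mem_inter_iff, Set.mem_ofPred_eq]
    tauto
  rw [hsplit]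
  refine (Set.ncard_union_le _ _).trans (add_le_add ?_ ?_)
  · refine Set.ncard_le_ncard_of_injOn (fun p => (0, p.1, p.2)) ?_ ?_ (Ts_finite _ _)
    · rintro ⟨A, B⟩ ⟨⟨h1, h2, h3⟩, h4⟩
      simp only [Set.mem_ofPred_eq] at h1 h2 h3 h4
      refine ⟨?_, ?_, by simp only; omega, by simp only; omega⟩
      · intro a ha
        exact Nat.pos_of_ne_zero (fun h => h4 (h ▸ ha))
      · intro a ha
        exact Nat.pos_of_ne_zero (fun h => h1 (h ▸ ha))
    · rintro ⟨A, B⟩ _ ⟨A', B'⟩ _ h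
      simpa using h
  · refine Set.ncard_le_ncard_of_injOn (fun p => (p.1.erase 0, p.2)) ?_ ?_ (Pr_finite _ _)
    · rintro ⟨A, B⟩ ⟨⟨h1, h2, h3⟩, h4⟩
      simp only [Set.mem_ofPred_eq] at h1 h2 h3 h4
      have h5 := Finset.card_erase_add_one h4
      have h6 := Finset.add_sum_erase A (fun x => x) h4
      refine ⟨h1, ?_, ?_⟩
      · simp only at h6 ⊢; omega
      · simp only; omega
    · rintro ⟨A, B⟩ ⟨_, h4⟩ ⟨A', B'⟩ ⟨_, h4'⟩ h
      simp only [Set.mem_ofPred_eq] at h4 h4'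
      simp only [Prod.mk.injEq] at h ⊢
      refine ⟨?_, h.2⟩
      rw [← Finset.insert_erase h4, h.1, Finset.insert_erase h4']

lemma Tc_le (l n c : ℕ) :
    (Ts (l : ℤ) n ∩ {t | t.1 = c}).ncard ≤ (Pr l (n - c * (l+1))).ncard := by
  refine Set.ncard_le_ncard_of_injOn
    (fun t => (t.2.1.map (addRightEmbedding c), t.2.2.image (· - c))) ?_ ?_ (Pr_finite _ _)
  · rintro ⟨c', A, B⟩ ⟨⟨h1, h2, h3, h4⟩, h5⟩
    simp only [Set.mem_ofPred_eq] at h1 h2 h3 h4 h5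
    subst h5
    have hinj : Set.InjOn (fun x => x - c') (B : Set ℕ) := by
      intro x hx y hy h
      have h1 := h2 x hx
      have h2 := h2 y hy
      simp only at h
      omega
    have h6 : ∑ x ∈ B, (x - c') + c' * B.card = ∑ x ∈ B, x := by
      rw [mul_comm, ← smul_eq_mul, ← Finset.sum_const, ← Finset.sum_add_distrib]
      apply Finset.sum_congr rfl
      intro x hx
      have := h2 x hx
      omega
    have hc : B.card = A.card + l := by omega
    refine ⟨?_, ?_, ?_⟩
    · simp only [Finset.mem_image, not_exists, not_and]
      intro x hx
      have := h2 x hx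
      omega
    · simp only [Finset.sum_map, addRightEmbedding_apply]
      rw [Finset.sum_image hinj, Finset.sum_add_distrib, Finset.sum_const, smul_eq_mul]
      rw [hc] at h6
      apply Nat.eq_sub_of_add_eq
      linarith
    · simp only [Finset.card_map]
      rw [Finset.card_image_of_injOn hinj, hc]
  · rintro ⟨c1, A, B⟩ ⟨⟨_, h1, _, _⟩, h5⟩ ⟨c2, A', B'⟩ ⟨⟨_, h2, _, _⟩, h6⟩ h
    simp only [Set.mem_ofPred_eq] at h1 h2 h5 h6
    subst h5
    subst h6
    simp only [Prod.mk.injEq, Finset.map_inj] at h ⊢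
    refine ⟨trivial, h.1, ?_⟩
    have e : ∀ S : Finset ℕ, (∀ b ∈ S, c2 < b) → (S.image (· - c2)).image (· + c2) = S := by
      intro S hS
      rw [Finset.image_image]
      conv_rhs => rw [← Finset.image_id (s := S)]
      apply Finset.image_congr
      intro x hx
      have := hS x hx
      simp only [Function.comp, id]
      omega
    rw [← e B h1, h.2, e B' h2]

lemma Ts_upper (l N : ℕ) (hl : l + 1 ≤ N) :
    (Ts (l : ℤ) (N + l * (l+1)/2)).ncard ≤ pc N + (N + l * (l+1)/2) * pc (N - (l+1)) := by
  set n := N + l * (l+1)/2 with hn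
  have hsub : Ts (l : ℤ) n = ⋃ c ∈ Finset.range (n+1), (Ts (l : ℤ) n ∩ {t | t.1 = c}) := by
    ext t
    simp only [Set.mem_iUnion, Set.mem_inter_iff, Set.mem_ofPred_eq, Finset.mem_range]
    constructor
    · intro h
      exact ⟨t.1, by have := h.2.2.1; omega, h, rfl⟩
    · rintro ⟨_, _, h, _⟩; exact h
  rw [hsub]
  refine (Finset.set_ncard_biUnion_le _ _).trans ?_
  rw [Finset.sum_range_succ', add_comm]
  apply add_le_add
  · refine (Tc_le _ _ _).trans ?_
    rw [zero_mul, Nat.sub_zero, Pr_card]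
  · calc _ ≤ ∑ c ∈ Finset.range n, pc (N - (l+1)) := by
          apply Finset.sum_le_sum
          intro c _
          refine (Tc_le _ _ _).trans ?_
          have hge : l + 1 ≤ (c+1) * (l+1) := Nat.le_mul_of_pos_left _ (by omega)
          by_cases h : n - (c+1) * (l+1) < l * (l+1)/2
          · rw [Pr_empty _ _ h]; simp
          · by_cases h0 : (c+1)*(l+1) ≤ N
            · rw [show n - (c+1)*(l+1) = (N - (c+1)*(l+1)) + l*(l+1)/2 by omega, Pr_card]
              exact pc_mono (by omega)
            · have : l * (l+1) / 2 = 0 ∧ n - (c+1) * (l+1) = 0 := by omega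
              rw [this.2]
              have h8 := Pr_card l 0
              rw [this.1] at h8
              rw [h8]
              exact pc_mono (by omega)
      _ = _ := by simp

lemma pc_iter (N D n t : ℕ) (hD0 : 0 < D) (hD : 2 * N < (D+1) * D) (h : n + 2 * D * t ≤ N) :
    2 ^ t * pc n ≤ pc (n + 2 * D * t) := by
  induction t with
  | zero => simp
  | succ t ih =>
    have e : n + 2 * D * (t+1) = n + 2 * D * t + 2 * D := by ring
    rw [e] at h ⊢
    have h1 := ih (by omega)
    have h2 := pc_mul (n + 2 * D * t) (2 * D) D (by omega)
    have h3 : 2 * pc (n + 2 * D * t) ≤ pc (n + 2 * D * t + 2 * D) := by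
      apply Nat.le_of_mul_le_mul_left _ hD0
      linarith
    rw [pow_succ]
    linarith

lemma pc_ratio (N l : ℕ) (hN : 4 ≤ N) (hl : l + 1 ≤ N)
    (h : Real.sqrt N * (Real.log N) ^ 2 < l) :
    Real.exp ((Real.log N)^2 / 8) * pc (N - (l+1)) ≤ 2 * pc N := by
  set L := Real.log N with hL
  set s := Real.sqrt N with hs
  have hs2 : 2 ≤ s := by
    rw [hs]
    apply Real.le_sqrt_of_sq_le
    have : (4:ℝ) ≤ N := by exact_mod_cast hN
    linarith
  have hss : s * s = N := Real.mul_self_sqrt (by positivity)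
  set D := Nat.sqrt (2 * N) + 1 with hDdef
  have hD : 2 * N < (D+1) * D := by
    have := Nat.lt_succ_sqrt (2*N)
    simp only [Nat.succ_eq_add_one, ← hDdef] at this
    nlinarith
  have hDs : (D : ℝ) ≤ 2 * s := by
    have h1 : (Nat.sqrt (2*N) : ℝ) * Nat.sqrt (2*N) ≤ 2 * N := by exact_mod_cast Nat.sqrt_le (2*N)
    have h2 : (Nat.sqrt (2*N) : ℝ) ≤ 2 * s - 1 := by
      by_contra hc
      push Not at hc
      nlinarith
    rw [hDdef]; push_cast; linarith
  set t := ⌊L^2/4⌋₊ with ht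
  have ht1 : (t : ℝ) ≤ L^2/4 := Nat.floor_le (by positivity)
  have ht2 : L^2/4 - 1 ≤ t := by have := Nat.lt_floor_add_one (L^2/4); linarith
  have hle : 2 * D * t ≤ l := by
    have : (2 * D * t : ℝ) ≤ l := by
      calc (2 * D * t : ℝ) ≤ 2 * (2 * s) * (L^2/4) := by gcongr
        _ = s * L^2 := by ring
        _ ≤ l := h.le
    exact_mod_cast this
  have h1 := pc_iter N D (N - (l+1)) t (by omega) hD (by omega)
  have h2 : 2 ^ t * pc (N - (l+1)) ≤ pc N := h1.trans (pc_mono (by omega))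
  have h3 : (2:ℝ) ^ t * pc (N - (l+1)) ≤ pc N := by exact_mod_cast h2
  have h4 : Real.exp (L^2/8) ≤ 2 * (2:ℝ)^t := by
    rw [← pow_succ', ← Real.exp_log (show (0:ℝ) < 2 ^ (t+1) by positivity), Real.log_pow]
    apply Real.exp_le_exp.mpr
    have := Real.log_two_gt_d9
    push_cast
    nlinarith [sq_nonneg L]
  calc _ ≤ (2 * (2:ℝ)^t) * pc (N - (l+1)) := by gcongr
    _ = 2 * ((2:ℝ)^t * pc (N - (l+1))) := by ring
    _ ≤ _ := by linarith

lemma final_bound (N : ℕ) (hN : Real.exp 100 ≤ N) :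
    3 * (N:ℝ)^2 * 2 ≤ 6 * (N : ℝ) ^ (-Real.sqrt (Real.log N)) * Real.exp ((Real.log N)^2 / 8) := by
  have hpos : (0:ℝ) < N := (Real.exp_pos _).trans_le hN
  have hL : 100 ≤ Real.log N := (Real.le_log_iff_exp_le hpos).mpr hN
  rw [Real.rpow_def_of_pos hpos, mul_assoc 6, ← Real.exp_add]
  have h2 : (N:ℝ)^2 = Real.exp (2 * Real.log N) := by
    rw [two_mul, Real.exp_add, Real.exp_log hpos]; ring
  rw [h2]
  set L := Real.log N
  set x := Real.sqrt L with hx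
  have hxx : x * x = L := Real.mul_self_sqrt (by linarith)
  have hx10 : 10 ≤ x := by
    apply Real.le_sqrt_of_sq_le; linarith
  have : Real.exp (2 * L) ≤ Real.exp (L * -x + L^2/8) := by
    apply Real.exp_le_exp.mpr
    have h5 : 2 + x ≤ L / 8 := by nlinarith
    nlinarith
  linarith

open Real

theorem stmt_9 :
    ∃ C > (0 : ℝ), ∃ N₀ : ℕ, ∀ N : ℕ, N₀ ≤ N → ∀ ℓ : ℤ,
      Real.sqrt N * (Real.log N) ^ 2 < |(ℓ : ℝ)| → |(ℓ : ℝ)| ≤ (N : ℝ) / 2 →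
      |(Vd ℓ (N + ℓ.natAbs * (ℓ.natAbs + 1) / 2) : ℝ) - (partitionCount (N : ℤ) : ℝ)| ≤
        C * (partitionCount (N : ℤ) : ℝ) * (N : ℝ) ^ (-Real.sqrt (Real.log N)) := by
  refine ⟨6, by norm_num, ⌈Real.exp 100⌉₊, ?_⟩
  intro N hN m h1 h2
  have hN' : Real.exp 100 ≤ N := (Nat.le_ceil _).trans (by exact_mod_cast hN)
  have hN4 : 4 ≤ N := by
    have := Real.add_one_le_exp (100:ℝ)
    have : (4:ℝ) ≤ N := by linarith
    exact_mod_cast this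
  have habs : |(m : ℝ)| = (m.natAbs : ℝ) := by
    rw [Nat.cast_natAbs, Int.cast_abs]
  rw [habs] at h1 h2
  rw [Vd_natAbs]
  have hp : partitionCount (N : ℤ) = pc N := by simp [partitionCount, pc]
  rw [hp]
  generalize m.natAbs = l at h1 h2
  have hl : l + 1 ≤ N := by
    have : (2 * l : ℝ) ≤ N := by linarith
    have : 2 * l ≤ N := by exact_mod_cast this
    omega
  have hlow := Ts_lower l N hl
  have hup := Ts_upper l N hl
  have hn : N + l * (l+1)/2 + 1 ≤ 3 * N^2 := by
    have : l * (l+1)/2 ≤ l * (l+1) := Nat.div_le_self _ _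
    nlinarith
  have hrat := pc_ratio N l hN4 hl h1
  have hfin := final_bound N hN'
  clear hN hN'
  generalize (Ts (l : ℤ) (N + l * (l+1)/2)).ncard = V at hlow hup ⊢
  generalize N + l * (l+1)/2 = n at hup hn
  have hlow' : (pc N : ℝ) ≤ V + pc (N - (l+1)) := by exact_mod_cast hlow
  have hup' : (V : ℝ) ≤ pc N + n * pc (N - (l+1)) := by exact_mod_cast hup
  have hn' : (n : ℝ) + 1 ≤ 3 * (N:ℝ)^2 := by exact_mod_cast hn
  have hq : (0:ℝ) ≤ pc (N - (l+1)) := Nat.cast_nonneg _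
  have hn0 : (0:ℝ) ≤ n := Nat.cast_nonneg _
  have hb : |(V:ℝ) - pc N| ≤ 3 * (N:ℝ)^2 * pc (N - (l+1)) := by
    have : ((n:ℝ) + 1) * pc (N - (l+1)) ≤ 3 * (N:ℝ)^2 * pc (N - (l+1)) :=
      mul_le_mul_of_nonneg_right hn' hq
    have h0 : 0 ≤ (n:ℝ) * pc (N - (l+1)) := mul_nonneg hn0 hq
    rw [abs_le]
    constructor <;> linarith
  refine hb.trans ?_
  have hE : 0 < Real.exp ((Real.log N)^2 / 8) := Real.exp_pos _
  have hpN : (0:ℝ) ≤ pc N := Nat.cast_nonneg _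
  have hN2 : (0:ℝ) ≤ 3 * (N:ℝ)^2 := by positivity
  clear hb hn' hn0 hup' hlow' hp hup hlow hn
  generalize (N : ℝ) ^ (-Real.sqrt (Real.log N)) = r at hfin ⊢
  generalize Real.exp ((Real.log N)^2 / 8) = E at hfin hrat hE
  generalize (pc (N - (l+1)) : ℝ) = q at hrat hq ⊢
  generalize (pc N : ℝ) = P at hrat hpN ⊢
  generalize 3 * (N:ℝ)^2 = a at hfin hN2 ⊢
  refine le_of_mul_le_mul_left ?_ hE
  calc E * (a * q) = a * (E * q) := by ring
    _ ≤ a * (2 * P) := mul_le_mul_of_nonneg_left hrat hN2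
    _ = (a * 2) * P := by ring
    _ ≤ (6 * r * E) * P := mul_le_mul_of_nonneg_right hfin hpN
    _ = _ := by ring
end

section
/- Let B = 2π/√6 and, for integers n ≥ 0 and ℓ ≥ 0, let Q₁(n, ℓ) = 2n(3n + 1) + 3nℓ and Q₂(n, ℓ) = Q₁(n, ℓ) + 8n + 4 + 2ℓ. There exist constants C > 0 and N₀ such that for all integers N ≥ N₀ and all integers ℓ with 0 ≤ ℓ ≤ √N·(log N)², |V_d(ℓ, N + ℓ(ℓ+1)/2)/p(N) − Σ_{n≥0} (e^{−B·Q₁(n,ℓ)/(2√N)} − e^{−B·Q₂(n,ℓ)/(2√N)})| ≤ C·N^{−1/5}. -/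
open scoped BigOperators

open Real

/-- `Q₁(n, ℓ) = 2n(3n + 1) + 3nℓ`. -/
def Q1 (n ℓ : ℕ) : ℕ := 2 * n * (3 * n + 1) + 3 * n * ℓ

/-- `Q₂(n, ℓ) = Q₁(n, ℓ) + 8n + 4 + 2ℓ`. -/
def Q2 (n ℓ : ℕ) : ℕ := Q1 n ℓ + 8 * n + 4 + 2 * ℓ


noncomputable section SCCA
open scoped PowerSeries.WithPiTopology
open PowerSeries PowerSeries.WithPiTopology


/-- geometric series `1/(1-X^(i+1))` -/
def gI (i : ℕ) : ℤ⟦X⟧ := ∑' j : ℕ, X ^ ((i + 1) * j)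

/-- `1/(q)_n` -/
def IP (n : ℕ) : ℤ⟦X⟧ := ∏ i ∈ Finset.range n, gI i

/-- partition generating series -/
def PS : ℤ⟦X⟧ := PowerSeries.mk fun n ↦ (Fintype.card (Nat.Partition n) : ℤ)

lemma gI_mul (i : ℕ) : gI i * (1 - X ^ (i + 1)) = 1 := by
  have := tsum_pow_mul_one_sub_of_constantCoeff_eq_zero (f := (X : ℤ⟦X⟧) ^ (i+1)) (by simp)
  simpa [gI, pow_mul] using this

lemma gI_hasSum (i : ℕ) : HasSum (fun j : ℕ => (X : ℤ⟦X⟧) ^ ((i + 1) * j)) (gI i) := by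
  have := summable_pow_of_constantCoeff_eq_zero (f := (X : ℤ⟦X⟧) ^ (i+1)) (by simp)
  simp_rw [← pow_mul] at this
  exact this.hasSum

lemma IP_succ (n : ℕ) : IP n = IP (n + 1) * (1 - X ^ (n + 1)) := by
  rw [IP, IP, Finset.prod_range_succ, mul_assoc, gI_mul, mul_one]

lemma PS_hasProd : HasProd gI PS := by
  have := Nat.Partition.hasProd_powerSeriesMk_card_restricted ℤ (fun _ => True)
  simpa [Nat.Partition.restricted, gI, PS] using! this

lemma dvd_all {f : ℤ⟦X⟧} (h : ∀ k : ℕ, X ^ k ∣ f) : f = 0 := by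
  ext n
  exact (PowerSeries.X_pow_dvd_iff.1 (h (n+1))) n (by omega)

lemma summable_dvd {f : ℕ → ℤ⟦X⟧} (h : ∀ k : ℕ, X ^ k ∣ f k) : Summable f := by
  rw [summable_iff_summable_coeff]
  intro d
  apply summable_of_ne_finset_zero (s := Finset.range (d+1))
  intro b hb
  exact (PowerSeries.X_pow_dvd_iff.1 (h b)) d (by simpa using hb)

lemma X_pow_dvd_tsum {f : ℕ → ℤ⟦X⟧} {k : ℕ} (hs : Summable f) (h : ∀ i, X ^ k ∣ f i) :
    X ^ k ∣ ∑' i, f i := by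
  rw [PowerSeries.X_pow_dvd_iff]
  intro m hm
  have := (hasSum_iff_hasSum_coeff (f := f)).1 hs.hasSum m
  rw [← this.tsum_eq]
  have h0 : ∀ i, coeff m (f i) = 0 := fun i => (PowerSeries.X_pow_dvd_iff.1 (h i)) m hm
  simp [h0]

lemma IP_sub_dvd (m j : ℕ) : X ^ (m+1) ∣ IP (m + j) - IP m := by
  induction j with
  | zero => simp
  | succ j ih =>
    have : IP (m + (j + 1)) - IP m = (IP (m+j) - IP m) + IP (m+j+1) * X ^ (m+j+1) := by
      rw [IP_succ (m+j)]; ring_nf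
    rw [this]
    apply dvd_add ih
    apply Dvd.dvd.mul_left
    exact pow_dvd_pow _ (by omega)

lemma PS_sub_dvd (m : ℕ) : X ^ (m+1) ∣ PS - IP m := by
  have h := PS_hasProd.tendsto_prod_nat
  rw [tendsto_iff_coeff_tendsto] at h
  rw [PowerSeries.X_pow_dvd_iff]
  intro d hd
  have h1 : Filter.Tendsto (fun n => coeff d (IP n)) Filter.atTop (nhds (coeff d (IP m))) := by
    apply tendsto_atTop_of_eventually_const (i₀ := m)
    intro i hi
    have := (PowerSeries.X_pow_dvd_iff.1 (IP_sub_dvd m (i-m))) d hd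
    rw [Nat.add_sub_cancel' hi, map_sub, sub_eq_zero] at this
    exact this
  have := tendsto_nhds_unique (h d) h1
  rw [map_sub, this, sub_self]

def Dt (m L : ℕ) : ℤ⟦X⟧ := X ^ (L * L + L * m) * IP L * IP (L + m)
def Et (m L : ℕ) : ℤ⟦X⟧ := X ^ (L * L + L * m) * IP L * IP (L + m + 1)
def At (m L : ℕ) : ℤ⟦X⟧ := X ^ (L * L + L * (m+1)) * IP L * IP (L + m) * gI (2 * L + m)

lemma pow_dvd_aux (L e : ℕ) (h : L ≤ e) (u : ℤ⟦X⟧) : X ^ L ∣ X ^ e * u :=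
  Dvd.dvd.mul_right (pow_dvd_pow _ h) _

lemma Dt_s (m : ℕ) : Summable (Dt m) := summable_dvd fun L => by
  rw [Dt, mul_assoc]; exact pow_dvd_aux _ _ (by nlinarith) _
lemma Et_s (m : ℕ) : Summable (Et m) := summable_dvd fun L => by
  rw [Et, mul_assoc]; exact pow_dvd_aux _ _ (by nlinarith) _
lemma At_s (m : ℕ) : Summable (At m) := summable_dvd fun L => by
  rw [At, mul_assoc, mul_assoc]; exact pow_dvd_aux _ _ (by nlinarith) _

def DD (m : ℕ) : ℤ⟦X⟧ := ∑' L, Dt m L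
def EE (m : ℕ) : ℤ⟦X⟧ := ∑' L, Et m L
def AA (m : ℕ) : ℤ⟦X⟧ := ∑' L, At m L

lemma D_eq1 (m : ℕ) : DD m = EE m - X ^ (m + 1) * DD (m + 1) := by
  rw [DD, EE, DD, ← (Dt_s (m+1)).tsum_mul_left, ← (Et_s m).tsum_sub ((Dt_s (m+1)).mul_left _)]
  congr 1; ext1 L
  rw [Dt, Et, Dt, IP_succ (L+m)]; ring

lemma D_eq2 (m : ℕ) : DD (m + 1) = EE m - X ^ (m + 1) * DD (m + 2) := by
  have h : ∀ L, Et m L - Dt (m+1) L = Et m L * (1 - X ^ L) := by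
    intro L
    rw [Dt, Et]; ring
  have h2 : EE m - DD (m+1) = ∑' L, Et m L * (1 - X ^ L) := by
    rw [EE, DD, ← (Et_s m).tsum_sub (Dt_s (m+1))]
    congr 1; ext1 L; exact h L
  have hs : Summable (fun L => Et m L * (1 - X ^ L)) := by
    simp_rw [← h]; exact (Et_s m).sub (Dt_s (m+1))
  rw [hs.tsum_eq_zero_add] at h2
  have h3 : ∀ L, Et m (L+1) * (1 - X ^ (L+1)) = X ^ (m+1) * Dt (m+2) L := by
    intro L
    rw [Et, Dt, IP_succ L]
    rw [show L + 1 + m + 1 = L + (m+2) by ring]; ring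
  simp_rw [h3] at h2
  rw [(Dt_s (m+2)).tsum_mul_left] at h2
  simp only [pow_zero, sub_self, mul_zero, zero_add] at h2
  rw [← DD] at h2
  linear_combination -h2

lemma D_const (m : ℕ) : DD m = DD (m+1) := by
  rw [← sub_eq_zero]
  apply dvd_all
  intro k
  induction k generalizing m with
  | zero => simp
  | succ k ih =>
    have : DD m - DD (m+1) = X * (X ^ m * (-(DD (m+1) - DD (m+1+1)))) := by
      rw [D_eq1 m]; nth_rewrite 2 [D_eq2 m]; ring
    rw [this, pow_succ']
    exact mul_dvd_mul_left _ (Dvd.dvd.mul_left ((dvd_neg).2 (ih (m+1))) _)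

lemma D_sub_dvd (m : ℕ) : X ^ m ∣ DD m - IP m := by
  rw [DD, (Dt_s m).tsum_eq_zero_add]
  have : Dt m 0 = IP m := by simp [Dt, IP]
  rw [this, add_sub_cancel_left]
  apply X_pow_dvd_tsum
  · exact (summable_nat_add_iff 1).2 (Dt_s m)
  · intro i
    rw [Dt, mul_assoc]; exact pow_dvd_aux _ _ (by nlinarith) _

lemma D_eq (m : ℕ) : DD m = PS := by
  have hc : ∀ j, DD (m + j) = DD m := by
    intro j
    induction j with
    | zero => rfl
    | succ j ih => rw [← ih]; exact (D_const _).symm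
  rw [← sub_eq_zero]
  apply dvd_all
  intro k
  have h1 := D_sub_dvd (m+k)
  have h2 := PS_sub_dvd (m+k)
  rw [hc] at h1
  have h3 := dvd_sub ((pow_dvd_pow X (show k ≤ m + k by omega)).trans h1)
    ((pow_dvd_pow X (show k ≤ m + k + 1 by omega)).trans h2)
  simpa using h3

lemma E_eq (m : ℕ) : EE m = (1 + X ^ (m+1)) * PS := by
  have := D_eq1 m
  rw [D_eq, D_eq] at this
  linear_combination -this

/-- here the index `m` is `ℓ`, the "m" of the paper proof is `ℓ+1`. -/
lemma A_rec (m : ℕ) : AA m = (1 - X ^ (2*m+4)) * PS + X ^ (3 * m + 8) * AA (m+4) := by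
  have hn : ∀ L, At m L = (1 - X ^ (m+2)) * Et (m+1) L +
      X ^ (L * L + L * (m+1) + (m+2)) * (IP L * (1 - X ^ L) * (1 - X ^ (L-1))) * IP (L+m+2)
        * gI (2*L+m) := by
    intro L
    have hg := gI_mul (2*L+m)
    rw [At, Et, IP_succ (L+m), IP_succ (L+m+1)]
    rw [show L + (m+1) + 1 = L + m + 2 by ring, show L+m+1+1 = L+m+2 by ring]
    rcases L with _ | L
    · have : gI m * (1 - X ^ (m+1)) = 1 := by simpa using hg
      simp only [Nat.zero_mul, Nat.mul_zero, Nat.zero_add, pow_zero, sub_self]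
      linear_combination (IP 0 * IP (m+2) * (1 - X^(m+2))) * this
    · simp only [Nat.add_sub_cancel]
      linear_combination (X ^ ((L+1)*(L+1)+(L+1)*(m+1)) * IP (L+1) * IP (L+1+m+2) * (1 - X^(m+2)))
        * hg
  set U : ℕ → ℤ⟦X⟧ := fun L => X ^ (L * L + L * (m+1) + (m+2)) *
    (IP L * (1 - X ^ L) * (1 - X ^ (L-1))) * IP (L+m+2) * gI (2*L+m) with hU
  have hUs : Summable U := summable_dvd fun L => by
    rw [hU]; simp only [mul_assoc]; exact pow_dvd_aux _ _ (by nlinarith) _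
  have hU2 : ∀ L, U (L + 2) = X ^ (3*m+8) * At (m+4) L := by
    intro L
    rw [hU, At, IP_succ L, IP_succ (L+1)]
    simp only [show L + 2 - 1 = L + 1 by omega, show L + 1 + 1 = L + 2 by omega,
      show L + 2 + m + 2 = L + (m+4) by omega, show 2 * (L+2) + m = 2 * L + (m+4) by omega]
    ring
  have h1 : AA m = (1 - X ^ (m+2)) * EE (m+1) + ∑' L, U L := by
    rw [AA, EE, ← (Et_s (m+1)).tsum_mul_left, ← ((Et_s (m+1)).mul_left _).tsum_add hUs]
    congr 1; ext1 L; exact hn L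
  rw [h1, ← hUs.sum_add_tsum_nat_add 2]
  simp_rw [hU2]
  rw [(At_s (m+4)).tsum_mul_left, ← AA, E_eq]
  have : ∑ i ∈ Finset.range 2, U i = 0 := by
    simp [Finset.sum_range_succ, hU]
  rw [this]; ring

def Q1' (n ℓ : ℕ) : ℕ := 2 * n * (3 * n + 1) + 3 * n * ℓ

lemma A_iter (ℓ k : ℕ) : AA ℓ = (∑ n ∈ Finset.range k, (X ^ (Q1' n ℓ) - X ^ (Q1' n ℓ + 8 * n + 4 + 2 * ℓ))) * PS
    + X ^ (Q1' k ℓ) * AA (ℓ + 4 * k) := by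
  induction k with
  | zero => simp [Q1']
  | succ k ih =>
    rw [Finset.sum_range_succ, ih]
    generalize (∑ n ∈ Finset.range k, ((X : ℤ⟦X⟧) ^ (Q1' n ℓ) - X ^ (Q1' n ℓ + 8 * n + 4 + 2 * ℓ))) = S
    nth_rewrite 1 [A_rec]
    rw [Q1', Q1']
    ring

end SCCA


noncomputable section SCCB
open scoped PowerSeries.WithPiTopology
open PowerSeries PowerSeries.WithPiTopology


lemma hasSum_of_eq {α : Type*} {f g : α → ℤ⟦X⟧} {a b : ℤ⟦X⟧} (h : HasSum f a)
    (hf : ∀ x, g x = f x) (hb : b = a) : HasSum g b := by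
  rw [hb, show g = f from funext hf]; exact h

lemma summable_of_eq {α : Type*} {f g : α → ℤ⟦X⟧} (h : Summable f)
    (hf : ∀ x, g x = f x) : Summable g := by
  rw [show g = f from funext hf]; exact h

lemma summable_w {α : Type*} {w : α → ℕ} (h : ∀ n, {a | w a = n}.Finite) :
    Summable fun a => (X : ℤ⟦X⟧) ^ (w a) := by
  rw [summable_iff_summable_coeff]
  intro d
  apply summable_of_hasFiniteSupport
  apply (h d).subset
  intro a ha
  simp only [Function.mem_support, coeff_X_pow, ne_eq, ite_eq_right_iff, one_ne_zero, imp_false,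
    not_not] at ha
  exact ha.symm

lemma coeff_w {α : Type*} {w : α → ℕ} (h : ∀ n, {a | w a = n}.Finite) {F : ℤ⟦X⟧}
    (hF : HasSum (fun a => (X : ℤ⟦X⟧) ^ (w a)) F) (n : ℕ) :
    coeff n F = ({a | w a = n}.ncard : ℤ) := by
  have h1 := (hasSum_iff_hasSum_coeff _).1 hF n
  have h2 : HasSum (fun a => coeff n ((X : ℤ⟦X⟧) ^ (w a)))
      (∑ a ∈ (h n).toFinset, coeff n ((X : ℤ⟦X⟧) ^ (w a))) := by
    apply hasSum_sum_of_ne_finset_zero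
    intro b hb
    rw [coeff_X_pow, if_neg]
    rintro rfl
    simp at hb
  rw [h1.unique h2, Set.ncard_eq_toFinset_card _ (h n), Finset.card_eq_sum_ones]
  push_cast
  apply Finset.sum_congr rfl
  intro a ha
  simp only [Set.Finite.mem_toFinset, Set.mem_ofPred_eq] at ha
  simp [coeff_X_pow, ha]

abbrev Inc (L c : ℕ) : Type := {l : List ℕ // l.length = L ∧ (c :: l).Pairwise (· < ·)}

lemma Inc.len_le {L c : ℕ} (u : Inc L c) : L ≤ u.1.sum := by
  have h : u.1.length ≤ u.1.sum := ?_
  · rwa [u.2.1] at h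
  apply List.length_le_sum_of_one_le
  intro i hi
  have := (List.pairwise_cons.1 u.2.2).1 i hi
  omega

lemma fin_lists (n : ℕ) : {l : List ℕ | l.length ≤ n + 1 ∧ l.sum = n}.Finite := by
  apply ((List.finite_length_le (Fin (n+1)) (n+1)).image (List.map Fin.val)).subset
  rintro l ⟨h1, h2⟩
  have h3 : ∀ x ∈ l, x < n + 1 := fun x hx => by
    have := List.le_sum_of_mem hx
    omega
  refine ⟨l.attach.map (fun x => ⟨x.1, h3 x.1 x.2⟩), by simpa using h1, ?_⟩
  simp [List.map_map, Function.comp_def]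

lemma Inc.fin (L c n : ℕ) : {u : Inc L c | u.1.sum = n}.Finite := by
  apply Set.Finite.of_finite_image (f := Subtype.val) _ Subtype.val_injective.injOn
  apply (fin_lists n).subset
  rintro _ ⟨u, hu, rfl⟩
  have := Inc.len_le u
  have h2 := u.2.1
  simp only [Set.mem_ofPred_eq] at hu ⊢
  omega

lemma inc_ext (L c b b' : ℕ) (l : List ℕ) (h h') (e : b = b') :
    (⟨b, ⟨l, h⟩⟩ : Σ b : ℕ, Inc L (c + 1 + b)) = ⟨b', ⟨l, h'⟩⟩ := by
  subst e; rfl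

def incEquiv (L c : ℕ) : (Σ b : ℕ, Inc L (c + 1 + b)) ≃ Inc (L+1) c where
  toFun x := ⟨(c + 1 + x.1) :: x.2.1, by simp [x.2.2.1], by
    rw [List.pairwise_cons]
    refine ⟨?_, x.2.2.2⟩
    intro a ha
    rcases List.mem_cons.1 ha with rfl | ha
    · omega
    · have := (List.pairwise_cons.1 x.2.2.2).1 a ha
      omega⟩
  invFun u := match u with
    | ⟨[], h⟩ => absurd h.1 (by simp)
    | ⟨a :: l, h⟩ => ⟨a - (c+1), l, by simpa using h.1, by
        have h1 := List.pairwise_cons.1 h.2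
        have := h1.1 a (by simp)
        rw [show c + 1 + (a - (c+1)) = a by omega]
        exact h1.2⟩
  left_inv x := by
    obtain ⟨b, l, h⟩ := x
    have e : c + 1 + b - (c + 1) = b := by omega
    exact inc_ext L c _ _ l _ _ e
  right_inv u := by
    obtain ⟨l, h⟩ := u
    match l, h with
    | [], h => exact absurd h.1 (by simp)
    | a :: l, h =>
      have h1 := List.pairwise_cons.1 h.2
      have := h1.1 a (by simp)
      apply Subtype.ext
      simp only [List.cons.injEq, and_true]
      omega

lemma inc_hasSum (L c : ℕ) : HasSum (fun u : Inc L c => (X : ℤ⟦X⟧) ^ u.1.sum)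
    (X ^ (L * (L+1) / 2 + c * L) * IP L) := by
  induction L generalizing c with
  | zero =>
    have : Unique (Inc 0 c) := ⟨⟨⟨[], by simp⟩⟩, fun u => Subtype.ext (List.length_eq_zero_iff.1 u.2.1)⟩
    have h2 : ∀ u : Inc 0 c, u.1 = [] := fun u => List.length_eq_zero_iff.1 u.2.1
    refine hasSum_of_eq (hasSum_unique _) (fun _ => rfl) ?_
    simp [IP, h2]
  | succ L ih =>
    rw [← (incEquiv L c).hasSum_iff]
    have hs : Summable ((fun u : Inc (L+1) c => (X : ℤ⟦X⟧) ^ u.1.sum) ∘ incEquiv L c) :=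
      (incEquiv L c).summable_iff.2 (summable_w (Inc.fin (L+1) c))
    refine HasSum.sigma_of_hasSum (g := fun b => X ^ (c + 1 + b) * (X ^ (L * (L+1) / 2 + (c+1+b) * L) * IP L))
      ?_ ?_ hs
    · have := ((gI_hasSum L).mul_left (X ^ ((L+1) * (L+2) / 2 + c * (L+1)) * IP L))
      refine hasSum_of_eq this ?_ ?_
      · intro b
        have e : (L+1)*(L+2)/2 = L * (L+1) / 2 + (L + 1) := by
          rw [show (L+1)*(L+2) = L * (L+1) + (L+1) * 2 by ring, Nat.add_mul_div_right _ _ (by norm_num)]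
        rw [e]; ring
      · rw [IP, IP, Finset.prod_range_succ]; ring_nf
    · intro b
      have := (ih (c + 1 + b)).mul_left (X ^ (c+1+b))
      refine hasSum_of_eq this ?_ rfl
      intro u
      simp [incEquiv, pow_add]

def TT (ℓ : ℕ) : Type := Σ L : ℕ, Σ c : ℕ, Inc L c × Inc (L + ℓ) c

def TT.w {ℓ : ℕ} (x : TT ℓ) : ℕ := x.2.2.1.1.sum + (x.2.1 + x.2.2.2.1.sum)

def TT.e {ℓ : ℕ} (x : TT ℓ) : List ℕ × ℕ := (x.2.2.1.1.reverse ++ x.2.1 :: x.2.2.2.1, x.1 + 1)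

lemma TT.e_sum {ℓ : ℕ} (x : TT ℓ) : x.e.1.sum = x.w := by
  simp [TT.e, TT.w]

lemma TT.e_inj {ℓ : ℕ} : Function.Injective (TT.e (ℓ := ℓ)) := by
  rintro ⟨L, c, u, v⟩ ⟨L', c', u', v'⟩ h
  simp only [TT.e, Prod.mk.injEq, Nat.add_right_cancel_iff] at h
  obtain ⟨h, rfl⟩ := h
  have := List.append_inj h (by simp [u.2.1, u'.2.1])
  simp only [List.reverse_inj, List.cons.injEq] at this
  obtain ⟨h1, rfl, h2⟩ := this
  have h1 := Subtype.ext h1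
  have h2 := Subtype.ext h2
  subst h1 h2
  rfl

lemma TT.fin (ℓ n : ℕ) : {x : TT ℓ | x.w = n}.Finite := by
  apply Set.Finite.of_finite_image (f := TT.e) _ TT.e_inj.injOn
  apply ((fin_lists n).prod (Set.finite_Iic (n+1))).subset
  rintro _ ⟨x, hx, rfl⟩
  have h1 := Inc.len_le x.2.2.1
  have h2 := Inc.len_le x.2.2.2
  have h3 := x.e_sum
  simp only [Set.mem_ofPred_eq, TT.w] at hx h3
  have h4 : x.e.1.length = x.1 + (x.1 + ℓ) + 1 := by
    simp [TT.e, x.2.2.1.2.1, x.2.2.2.2.1]; omega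
  have h5 : x.e.2 = x.1 + 1 := rfl
  refine ⟨⟨?_, ?_⟩, ?_⟩
  · omega
  · omega
  · simp only [Set.mem_Iic]; omega

lemma TT.hasSum (ℓ : ℕ) : HasSum (fun x : TT ℓ => (X : ℤ⟦X⟧) ^ x.w) (X ^ (ℓ * (ℓ+1)/2) * AA ℓ) := by
  have hs : Summable (fun x : TT ℓ => (X : ℤ⟦X⟧) ^ x.w) := summable_w (TT.fin ℓ)
  refine HasSum.sigma_of_hasSum (g := fun L => X ^ (ℓ * (ℓ+1)/2) * At ℓ L)
      ((At_s ℓ).hasSum.mul_left _) ?_ hs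
  intro L
  have hs1 := hs.sigma_factor L
  refine HasSum.sigma_of_hasSum (g := fun c => X ^ (L * (L+1) / 2 + c * L) * IP L * (X ^ c *
    (X ^ ((L+ℓ) * (L+ℓ+1) / 2 + c * (L+ℓ)) * IP (L+ℓ)))) ?_ ?_ hs1
  · have := ((gI_hasSum (2 * L + ℓ)).mul_left (X ^ (ℓ * (ℓ+1)/2 + L * L + L * (ℓ+1)) * IP L * IP (L + ℓ)))
    refine hasSum_of_eq this ?_ ?_
    · intro c
      have e : L * (L+1) / 2 + (L+ℓ)*(L+ℓ+1)/2 = ℓ * (ℓ+1)/2 + L * L + L * (ℓ+1) := by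
        obtain ⟨a, ha⟩ := Nat.even_mul_succ_self L
        obtain ⟨b, hb⟩ := Nat.even_mul_succ_self ℓ
        obtain ⟨d, hd⟩ := Nat.even_mul_succ_self (L+ℓ)
        have : d + a = b + L * L + L * (ℓ+1) := by nlinarith
        rw [ha, hb, hd]
        omega
      rw [← e]; ring
    · rw [At]; ring
  · intro c
    have hs2 := hs1.sigma_factor c
    have := (inc_hasSum L c).mul ((inc_hasSum (L+ℓ) c).mul_left (X ^ c)) (by
      refine summable_of_eq hs2 ?_
      intro x
      simp [TT.w, pow_add])
    refine hasSum_of_eq this ?_ rfl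
    intro x
    simp [TT.w, pow_add]

lemma TT.range (ℓ n : ℕ) : TT.e '' {x : TT ℓ | x.w = n} =
    {p : List ℕ × ℕ | IsSCC n p.1 p.2 ∧ sccRank p.1 p.2 = ℓ} := by
  ext ⟨l, k⟩
  constructor
  · rintro ⟨x, hx, hxe⟩
    have h3 := x.e_sum
    obtain ⟨L, c, u, v⟩ := x
    have hu := u.2.1
    have hv := v.2.1
    have hup := u.2.2
    have hvp := v.2.2
    have h4 : (TT.e (ℓ := ℓ) ⟨L, c, u, v⟩).1.length = L + (L + ℓ) + 1 := by
      simp [TT.e, u.2.1, v.2.1]; omega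
    rw [hxe] at h3 h4
    simp only [Set.mem_ofPred_eq] at hx h3 h4 ⊢
    rw [hx] at h3
    simp only [TT.e, Prod.mk.injEq] at hxe
    obtain ⟨rfl, rfl⟩ := hxe
    refine ⟨⟨by omega, by rw [h4]; omega, h3, ?_, ?_⟩, ?_⟩
    · have hp : ((u.1.reverse ++ [c])).Pairwise (fun a b => b < a) := by
        rw [← List.pairwise_reverse]; simpa using hup
      rw [List.pairwise_iff_getElem] at hp
      intro i j hij hj
      have := hp i j (by simp; omega) (by simp; omega) hij
      simp only [List.get_eq_getElem]
      have e : u.1.reverse ++ c :: v.1 = (u.1.reverse ++ [c]) ++ v.1 := by simp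
      have e2 : ∀ (i : ℕ) (h : i < (u.1.reverse ++ c :: v.1).length) (h' : i < (u.1.reverse ++ [c]).length),
        (u.1.reverse ++ c :: v.1)[i] = (u.1.reverse ++ [c])[i] := by
        intro i h h'
        simp only [e]
        rw [List.getElem_append_left]
      rw [e2 j j.2 (by simp; omega), e2 i i.2 (by simp; omega)]
      exact this
    · rw [List.pairwise_iff_getElem] at hvp
      intro i j hi hij
      have hj := j.2
      simp only [List.length_append, List.length_reverse, List.length_cons] at hj
      have := hvp (i - L) (j - L) (by simp; omega) (by simp; omega) (by omega)
      simp only [List.get_eq_getElem]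
      rw [List.getElem_append_right (by simp; omega), List.getElem_append_right (by simp; omega)]
      simpa [hu] using this
    · rw [sccRank, h4]; push_cast; ring
  · rintro ⟨⟨h1, h2, h3, h4, h5⟩, h6⟩
    simp only at h1 h2 h3 h4 h5
    simp only [sccRank] at h6
    have hk : k - 1 < l.length := by omega
    have hl : l = l.take (k-1) ++ l[k-1] :: l.drop k := by
      conv_lhs => rw [← List.take_append_drop (k-1) l, List.drop_eq_getElem_cons hk]
      rw [show k - 1 + 1 = k by omega]
    have hA : (l[k-1] :: (l.take (k-1)).reverse).Pairwise (· < ·) := by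
      have e : l[k-1] :: (l.take (k-1)).reverse = (l.take k).reverse := by
        have := List.take_concat_get' l (k-1) hk
        simp only [show k - 1 + 1 = k by omega] at this
        rw [← this, List.reverse_append]; simp
      rw [e, List.pairwise_reverse, List.pairwise_iff_getElem]
      intro i j hi hj hij
      simp only [List.length_take] at hi hj
      have := h4 ⟨i, by omega⟩ ⟨j, by omega⟩ hij (by simp only; omega)
      simpa using this
    have hB : (l[k-1] :: l.drop k).Pairwise (· < ·) := by
      have e : l[k-1] :: l.drop k = l.drop (k-1) := by
        rw [List.drop_eq_getElem_cons hk, show k - 1 + 1 = k by omega]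
      rw [e, List.pairwise_iff_getElem]
      intro i j hi hj hij
      simp only [List.length_drop] at hi hj
      have := h5 ⟨k - 1 + i, by omega⟩ ⟨k - 1 + j, by omega⟩ (by simp) (by simp only; omega)
      simpa using this
    refine ⟨⟨k-1, l[k-1], ⟨(l.take (k-1)).reverse, by simp; omega, hA⟩,
      ⟨l.drop k, by simp; omega, hB⟩⟩, ?_, ?_⟩
    · change TT.w _ = n
      refine (TT.e_sum _).symm.trans (Eq.trans ?_ h3)
      conv_rhs => rw [hl]
      simp [TT.e]
    · simp only [TT.e, Prod.mk.injEq, List.reverse_reverse]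
      exact ⟨hl.symm, by omega⟩

lemma Vd_eq_coeff (ℓ N : ℕ) : (Vd ℓ (N + ℓ * (ℓ+1)/2) : ℤ) = coeff N (AA ℓ) := by
  rw [Vd, ← TT.range, Set.ncard_image_of_injective _ TT.e_inj,
    ← coeff_w (TT.fin ℓ) (TT.hasSum ℓ), coeff_X_pow_mul]

lemma coeff_XPS (N Q : ℕ) : coeff N (X ^ Q * PS) = (partitionCount ((N : ℤ) - Q) : ℤ) := by
  rw [coeff_X_pow_mul', partitionCount]
  by_cases h : Q ≤ N
  · rw [if_pos h, if_pos (by omega), PS, coeff_mk]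
    rw [show ((N : ℤ) - Q).toNat = N - Q by omega]
  · rw [if_neg h, if_neg (by omega)]; simp

/-- the exact formula -/
lemma Vd_formula (ℓ N k : ℕ) (hk : N < k) : (Vd ℓ (N + ℓ * (ℓ+1)/2) : ℤ) =
    ∑ n ∈ Finset.range k, ((partitionCount ((N : ℤ) - Q1 n ℓ) : ℤ) - partitionCount ((N : ℤ) - Q2 n ℓ)) := by
  rw [Vd_eq_coeff, A_iter ℓ k, map_add, coeff_X_pow_mul', if_neg, add_zero, Finset.sum_mul, map_sum]
  · apply Finset.sum_congr rfl
    intro n _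
    rw [sub_mul, map_sub, coeff_XPS, coeff_XPS]
    rfl
  · rw [Q1']; nlinarith

end SCCB


noncomputable section SCCC
open scoped PowerSeries.WithPiTopology
open PowerSeries PowerSeries.WithPiTopology


def evs (f : ℤ⟦X⟧) (z : ℂ) : ℂ := ∑' n, ((coeff n f : ℤ) : ℂ) * z ^ n

def Good (f : ℤ⟦X⟧) (z : ℂ) : Prop := Summable fun n => ‖((coeff n f : ℤ) : ℂ) * z ^ n‖

lemma mul_coeff (f g : ℤ⟦X⟧) (z : ℂ) (n : ℕ) : ((coeff n (f * g) : ℤ) : ℂ) * z ^ n =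
    ∑ kl ∈ Finset.HasAntidiagonal.antidiagonal n, (((coeff kl.1 f : ℤ) : ℂ) * z ^ kl.1) * (((coeff kl.2 g : ℤ) : ℂ) * z ^ kl.2) := by
  rw [coeff_mul]
  push_cast
  rw [Finset.sum_mul]
  apply Finset.sum_congr rfl
  intro kl hkl
  rw [← Finset.HasAntidiagonal.mem_antidiagonal.1 hkl]; ring

lemma Good.mul {f g : ℤ⟦X⟧} {z : ℂ} (hf : Good f z) (hg : Good g z) : Good (f * g) z := by
  have := summable_norm_sum_mul_antidiagonal_of_summable_norm hf hg
  simp_rw [← mul_coeff] at this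
  exact this

lemma evs_mul {f g : ℤ⟦X⟧} {z : ℂ} (hf : Good f z) (hg : Good g z) :
    evs (f * g) z = evs f z * evs g z := by
  have := tsum_mul_tsum_eq_tsum_sum_antidiagonal_of_summable_norm hf hg
  simp_rw [← mul_coeff] at this
  exact this.symm

lemma evs_one (z : ℂ) : evs 1 z = 1 := by
  rw [evs, tsum_eq_single 0]
  · simp
  · intro n hn; simp [coeff_one, hn]

lemma good_one (z : ℂ) : Good 1 z := by
  apply summable_of_ne_finset_zero (s := {0})
  intro n hn
  have : n ≠ 0 := by simpa using hn
  simp [coeff_one, this]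

lemma evs_lin (i : ℕ) (z : ℂ) : evs (1 - X ^ (i+1)) z = 1 - z ^ (i+1) := by
  rw [evs, tsum_eq_sum (s := {0, i+1})]
  · rw [Finset.sum_pair (by omega)]
    simp [coeff_X_pow, coeff_one]; ring
  · intro n hn
    have : n ≠ 0 ∧ n ≠ i + 1 := by simpa using hn
    simp [coeff_one, this, coeff_X_pow]

lemma good_lin (i : ℕ) (z : ℂ) : Good (1 - X ^ (i+1)) z := by
  apply summable_of_ne_finset_zero (s := {0, i+1})
  intro n hn
  have : n ≠ 0 ∧ n ≠ i + 1 := by simpa using hn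
  simp [coeff_one, this, coeff_X_pow]

lemma coeff_gI (i n : ℕ) : 0 ≤ coeff n (gI i) ∧ coeff n (gI i) ≤ 1 := by
  induction n using Nat.strong_induction_on with
  | _ n ih =>
    have h : gI i = 1 + X ^ (i+1) * gI i := by linear_combination gI_mul i
    rw [h, map_add, coeff_one, coeff_X_pow_mul']
    rcases Nat.eq_zero_or_pos n with rfl | hn
    · simp
    · rw [if_neg (by omega)]
      split_ifs with h1
      · simpa using ih (n - (i+1)) (by omega)
      · simp

lemma good_gI (i : ℕ) {z : ℂ} (hz : ‖z‖ < 1) : Good (gI i) z := by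
  apply Summable.of_nonneg_of_le (fun _ => norm_nonneg _) _
    (summable_geometric_of_lt_one (norm_nonneg z) hz)
  intro n
  rw [norm_mul, norm_pow]
  have h := coeff_gI i n
  have : ‖((coeff n (gI i) : ℤ) : ℂ)‖ ≤ 1 := by
    rw [Complex.norm_intCast]
    have h1 : (0:ℝ) ≤ (coeff n (gI i) : ℤ) := by exact_mod_cast h.1
    rw [abs_of_nonneg h1]
    exact_mod_cast h.2
  calc _ ≤ 1 * ‖z‖ ^ n := by gcongr
    _ = _ := one_mul _

lemma evs_gI (i : ℕ) {z : ℂ} (hz : ‖z‖ < 1) : evs (gI i) z = (1 - z ^ (i+1))⁻¹ := by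
  have := evs_mul (good_gI i hz) (good_lin i z)
  rw [gI_mul, evs_one, evs_lin] at this
  exact eq_inv_of_mul_eq_one_left this.symm

lemma good_IP (m : ℕ) {z : ℂ} (hz : ‖z‖ < 1) : Good (IP m) z := by
  induction m with
  | zero => simpa [IP] using good_one z
  | succ m ih =>
    rw [IP, Finset.prod_range_succ]
    exact ih.mul (good_gI m hz)

lemma evs_IP (m : ℕ) {z : ℂ} (hz : ‖z‖ < 1) :
    evs (IP m) z = ∏ i ∈ Finset.range m, (1 - z ^ (i+1))⁻¹ := by
  induction m with
  | zero => simpa [IP] using evs_one z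
  | succ m ih =>
    rw [Finset.prod_range_succ, ← ih, ← evs_gI m hz, ← evs_mul (good_IP m hz) (good_gI m hz),
      IP, IP, Finset.prod_range_succ]

lemma coeff_IP_nonneg (m n : ℕ) : 0 ≤ coeff n (IP m) := by
  induction m generalizing n with
  | zero => simp [IP, coeff_one]; split_ifs <;> simp
  | succ m ih =>
    rw [IP, Finset.prod_range_succ, ← IP, coeff_mul]
    exact Finset.sum_nonneg fun kl _ => mul_nonneg (ih _) (coeff_gI m _).1

lemma coeff_IP_mono (n : ℕ) : Monotone (fun m => coeff n (IP m)) := by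
  apply monotone_nat_of_le_succ
  intro m
  have : IP (m+1) = IP m + X ^ (m+1) * IP (m+1) := by
    have := IP_succ m
    linear_combination -this
  rw [this, map_add, coeff_X_pow_mul']
  split_ifs
  · have := coeff_IP_nonneg (m+1) (n - (m+1)); linarith
  · simp

def pn (n : ℕ) : ℕ := Fintype.card (Nat.Partition n)

lemma coeff_IP_eq {m n : ℕ} (h : n ≤ m) : coeff n (IP m) = (pn n : ℤ) := by
  have := (PowerSeries.X_pow_dvd_iff.1 (PS_sub_dvd m)) n (by omega)
  rw [map_sub, sub_eq_zero, PS, coeff_mk] at this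
  exact this.symm

lemma coeff_IP_le (m n : ℕ) : coeff n (IP m) ≤ (pn n : ℤ) := by
  rw [← coeff_IP_eq (le_max_left n m)]
  exact coeff_IP_mono n (le_max_right n m)

lemma prod_bound {x : ℝ} (h0 : 0 ≤ x) (h1 : x < 1) (m : ℕ) :
    ∏ i ∈ Finset.range m, (1 - x ^ (i+1))⁻¹ ≤ Real.exp ((1 - x)⁻¹ * (1 - x)⁻¹) := by
  have hx : 0 < 1 - x := by linarith
  calc _ ≤ ∏ i ∈ Finset.range m, Real.exp (x ^ i * (1 - x)⁻¹) := by
        apply Finset.prod_le_prod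
        · intro i _
          have : x ^ (i+1) ≤ 1 := pow_le_one₀ h0 h1.le
          exact inv_nonneg.2 (by linarith)
        · intro i _
          have hle : x ^ (i+1) ≤ x := by
            calc x ^ (i+1) ≤ x ^ 1 := pow_le_pow_of_le_one h0 h1.le (by omega)
              _ = x := pow_one x
          have h3 : x ^ (i+1) ≤ x ^ i := pow_le_pow_of_le_one h0 h1.le (by omega)
          have hp : 0 < 1 - x ^ (i+1) := by linarith
          calc (1 - x ^ (i+1))⁻¹ = x ^ (i+1) * (1 - x ^ (i+1))⁻¹ + 1 := by field_simp; ring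
            _ ≤ x ^ i * (1 - x)⁻¹ + 1 := by gcongr
            _ ≤ _ := Real.add_one_le_exp _
    _ = Real.exp (∑ i ∈ Finset.range m, x ^ i * (1 - x)⁻¹) := (Real.exp_sum _ _).symm
    _ ≤ _ := by
      rw [← Finset.sum_mul]
      gcongr
      rw [← tsum_geometric_of_lt_one h0 h1]
      exact (summable_geometric_of_lt_one h0 h1).sum_le_tsum _ (fun i _ => by positivity)

lemma pn_summable {x : ℝ} (h0 : 0 ≤ x) (h1 : x < 1) : Summable fun n => (pn n : ℝ) * x ^ n := by
  apply summable_of_sum_range_le (c := Real.exp ((1 - x)⁻¹ * (1 - x)⁻¹))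
  · intro n; positivity
  · intro K
    have hz : ‖(x : ℂ)‖ < 1 := by rw [Complex.norm_real, Real.norm_of_nonneg h0]; exact h1
    have h3 : (evs (IP K) x) = ((∏ i ∈ Finset.range K, (1 - x ^ (i+1))⁻¹ : ℝ) : ℂ) := by
      rw [evs_IP K hz]; push_cast; rfl
    have h4 : (evs (IP K) x) = ((∑' n, ((coeff n (IP K) : ℤ) : ℝ) * x ^ n : ℝ) : ℂ) := by
      rw [evs]; push_cast; rfl
    have h5 : ∑' n, ((coeff n (IP K) : ℤ) : ℝ) * x ^ n = ∏ i ∈ Finset.range K, (1 - x ^ (i+1))⁻¹ := by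
      rw [h3] at h4; exact_mod_cast h4.symm
    have h6 : Summable (fun n => ((coeff n (IP K) : ℤ) : ℝ) * x ^ n) := by
      have := good_IP K hz
      have h7 : ∀ n, ‖((coeff n (IP K) : ℤ) : ℂ) * (x:ℂ) ^ n‖ = ((coeff n (IP K) : ℤ) : ℝ) * x ^ n := by
        intro n
        rw [norm_mul, norm_pow, Complex.norm_real, Real.norm_of_nonneg h0, Complex.norm_intCast,
          abs_of_nonneg]
        exact_mod_cast coeff_IP_nonneg K n
      rw [Good] at this
      simpa only [h7] using this
    refine le_trans ?_ (prod_bound h0 h1 K)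
    rw [← h5]
    refine le_trans (le_of_eq ?_) (h6.sum_le_tsum (Finset.range K) ?_)
    · apply Finset.sum_congr rfl
      intro n hn
      rw [coeff_IP_eq (Finset.mem_range.1 hn).le]; simp
    · intro n _
      have : (0:ℝ) ≤ (coeff n (IP K) : ℤ) := by exact_mod_cast coeff_IP_nonneg K n
      positivity

/-- partition function gf -/
def Pz (z : ℂ) : ℂ := ∑' n, (pn n : ℂ) * z ^ n

lemma Pz_tendsto {z : ℂ} (hz : ‖z‖ < 1) :
    Filter.Tendsto (fun m => ∏ i ∈ Finset.range m, (1 - z ^ (i+1))⁻¹) Filter.atTop (nhds (Pz z)) := by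
  simp_rw [← evs_IP _ hz]
  apply tendsto_tsum_of_dominated_convergence (pn_summable (norm_nonneg z) hz)
  · intro n
    apply tendsto_atTop_of_eventually_const (i₀ := n)
    intro m hm
    rw [coeff_IP_eq hm]; simp
  · filter_upwards with m n
    rw [norm_mul, norm_pow, Complex.norm_intCast, abs_of_nonneg]
    · gcongr
      exact_mod_cast coeff_IP_le m n
    · exact_mod_cast coeff_IP_nonneg m n

lemma Pz_exp {z : ℂ} (hz : ‖z‖ < 1) {S : ℂ}
    (hs : HasSum (fun x : ℕ × ℕ => (z ^ ((x.2 + 1) * x.1)) / (x.1 : ℂ)) S) :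
    Pz z = Complex.exp S := by
  have h1 : HasSum (fun i : ℕ => -Complex.log (1 - z ^ (i+1))) S := by
    have hs' : HasSum (fun x : ℕ × ℕ => (z ^ ((x.1 + 1) * x.2)) / (x.2 : ℂ)) S := by
      rw [← (Equiv.prodComm ℕ ℕ).hasSum_iff] at hs
      exact hs
    refine hs'.prod_fiberwise (fun i => ?_)
    have hi : ‖z ^ (i+1)‖ < 1 := by
      rw [norm_pow]; exact pow_lt_one₀ (norm_nonneg _) hz (by omega)
    have := Complex.hasSum_taylorSeries_neg_log hi
    simpa only [← pow_mul] using this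
  have h2 := (Complex.continuous_exp.tendsto S).comp h1.tendsto_sum_nat
  refine tendsto_nhds_unique (Pz_tendsto hz) (h2.congr ?_)
  intro m
  simp only [Function.comp_apply]
  rw [Complex.exp_sum]
  apply Finset.prod_congr rfl
  intro i _
  rw [Complex.exp_neg, Complex.exp_log]
  intro h0
  have : ‖z ^ (i+1)‖ < 1 := by
    rw [norm_pow]; exact pow_lt_one₀ (norm_nonneg _) hz (by omega)
  rw [sub_eq_zero] at h0
  rw [← h0] at this
  simp at this

end SCCC


noncomputable section SCCD



def nn (x : ℕ × ℕ) : ℕ := (x.2 + 1) * x.1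
def aw (t : ℝ) (x : ℕ × ℕ) : ℝ := Real.exp (-(nn x : ℝ) * t) / (x.1 : ℝ)

lemma aw_nonneg (t : ℝ) (x : ℕ × ℕ) : 0 ≤ aw t x := by unfold aw; positivity

lemma aw_row (t : ℝ) (m k : ℕ) : aw t (m, k) =
    (Real.exp (-(m * t)) / m) * Real.exp (-(m * t)) ^ k := by
  rw [aw, nn, ← Real.exp_nat_mul, div_mul_eq_mul_div, ← Real.exp_add]
  congr 2
  push_cast; ring

lemma aw_row_hasSum {t : ℝ} (ht : 0 < t) (m : ℕ) : HasSum (fun k => aw t (m, k))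
    ((Real.exp (-(m * t)) / m) * (1 - Real.exp (-(m * t)))⁻¹) := by
  simp_rw [aw_row]
  rcases Nat.eq_zero_or_pos m with rfl | hm
  · simp
  · apply HasSum.mul_left
    apply hasSum_geometric_of_lt_one (Real.exp_pos _).le
    rw [Real.exp_lt_one_iff]
    have : (0:ℝ) < m := by exact_mod_cast hm
    simp; positivity

lemma row_le {t : ℝ} (ht : 0 < t) (m : ℕ) :
    (Real.exp (-(m * t)) / m) * (1 - Real.exp (-(m * t)))⁻¹ ≤ (1 / (m:ℝ)^2) * t⁻¹ := by
  rcases Nat.eq_zero_or_pos m with rfl | hm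
  · simp
  · have hm' : (0:ℝ) < m := by exact_mod_cast hm
    set y := (m:ℝ) * t with hy
    have hy0 : 0 < y := by positivity
    have h1 := Real.add_one_le_exp y
    have h2 : Real.exp (-y) * Real.exp y = 1 := by rw [← Real.exp_add]; simp
    have h3 := Real.exp_pos (-y)
    have h5 : Real.exp (-y) < 1 := by rw [Real.exp_lt_one_iff]; linarith
    have h4 : Real.exp (-y) * (1 - Real.exp (-y))⁻¹ ≤ y⁻¹ := by
      rw [← div_eq_mul_inv, ← one_div, div_le_div_iff₀ (by linarith) hy0]
      nlinarith
    have ht' : t⁻¹ = m * y⁻¹ := by rw [hy]; field_simp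
    calc _ = (1 / (m:ℝ)) * (Real.exp (-y) * (1 - Real.exp (-y))⁻¹) := by ring
      _ ≤ (1 / (m:ℝ)) * y⁻¹ := by gcongr
      _ = _ := by rw [ht']; field_simp

lemma aw_summable {t : ℝ} (ht : 0 < t) : Summable (aw t) := by
  rw [summable_prod_of_nonneg (fun x => aw_nonneg t x)]
  refine ⟨fun m => (aw_row_hasSum ht m).summable, ?_⟩
  refine Summable.of_nonneg_of_le (fun m => tsum_nonneg fun k => aw_nonneg t _) (fun m => ?_)
    (hasSum_zeta_two.summable.mul_right t⁻¹)
  rw [(aw_row_hasSum ht m).tsum_eq]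
  exact row_le ht m

lemma aw_tsum_le {t : ℝ} (ht : 0 < t) : ∑' x, aw t x ≤ Real.pi ^ 2 / 6 * t⁻¹ := by
  rw [(aw_summable ht).tsum_prod, ← hasSum_zeta_two.tsum_eq, ← tsum_mul_right]
  apply Summable.tsum_le_tsum
  · intro m; rw [(aw_row_hasSum ht m).tsum_eq]; exact row_le ht m
  · exact (aw_summable ht).prod
  · exact (hasSum_zeta_two.summable.mul_right t⁻¹)

lemma mom_le {t : ℝ} (ht : 0 < t) (p : ℕ) (x : ℕ × ℕ) :
    (nn x : ℝ) ^ p * aw t x ≤ (2 ^ p * p.factorial / t ^ p) * aw (t / 2) x := by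
  have h := Real.pow_div_factorial_le_exp ((nn x : ℝ) * (t / 2)) (by positivity) p
  have h2 : Real.exp (-(nn x : ℝ) * (t/2)) = Real.exp ((nn x : ℝ) * (t / 2)) * Real.exp (-(nn x : ℝ) * t) := by
    rw [← Real.exp_add]; congr 1; ring
  rw [aw, aw, h2]
  have hf : (0:ℝ) < p.factorial := by exact_mod_cast p.factorial_pos
  rw [div_le_iff₀ hf, mul_pow, div_pow] at h
  have h3 : (nn x : ℝ) ^ p ≤ (2 ^ p * p.factorial / t ^ p) * Real.exp ((nn x : ℝ) * (t / 2)) := by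
    calc (nn x : ℝ) ^ p = ((nn x : ℝ) ^ p * (t ^ p / 2 ^ p)) * (2 ^ p / t ^ p) := by field_simp
      _ ≤ (Real.exp ((nn x : ℝ) * (t / 2)) * p.factorial) * (2 ^ p / t ^ p) := by gcongr
      _ = _ := by ring
  calc _ ≤ ((2 ^ p * p.factorial / t ^ p) * Real.exp ((nn x : ℝ) * (t / 2))) * (Real.exp (-(nn x : ℝ) * t) / (x.1 : ℝ)) := by gcongr
    _ = _ := by ring

lemma mom_summable {t : ℝ} (ht : 0 < t) (p : ℕ) : Summable fun x => (nn x : ℝ) ^ p * aw t x :=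
  Summable.of_nonneg_of_le (fun x => mul_nonneg (by positivity) (aw_nonneg t x)) (mom_le ht p)
    ((aw_summable (half_pos ht)).mul_left _)

def mom (p : ℕ) (t : ℝ) : ℝ := ∑' x, (nn x : ℝ) ^ p * aw t x

lemma mom_nonneg (p : ℕ) (t : ℝ) : 0 ≤ mom p t :=
  tsum_nonneg fun x => mul_nonneg (by positivity) (aw_nonneg t x)

lemma mom_bound {t : ℝ} (ht : 0 < t) (p : ℕ) :
    mom p t ≤ (2 ^ (p+1) * p.factorial * (Real.pi ^ 2 / 6)) / t ^ (p+1) := by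
  calc mom p t ≤ ∑' x, (2 ^ p * p.factorial / t ^ p) * aw (t / 2) x :=
        Summable.tsum_le_tsum (mom_le ht p) (mom_summable ht p) ((aw_summable (half_pos ht)).mul_left _)
    _ = (2 ^ p * p.factorial / t ^ p) * ∑' x, aw (t / 2) x := tsum_mul_left
    _ ≤ (2 ^ p * p.factorial / t ^ p) * (Real.pi ^ 2 / 6 * (t/2)⁻¹) := by
        gcongr; exact aw_tsum_le (half_pos ht)
    _ = _ := by rw [pow_succ, pow_succ]; field_simp; ring

lemma mean_row {t : ℝ} (ht : 0 < t) (m : ℕ) (hm : 0 < m) : HasSum (fun k => (nn (m,k) : ℝ) ^ 1 * aw t (m, k))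
    (Real.exp (-(m * t)) / (1 - Real.exp (-(m * t))) ^ 2) := by
  have hm' : (0:ℝ) < m := by exact_mod_cast hm
  have h1 : ‖Real.exp (-(m * t))‖ < 1 := by
    rw [Real.norm_of_nonneg (Real.exp_pos _).le, Real.exp_lt_one_iff]
    simp; positivity
  have := hasSum_coe_mul_geometric_of_norm_lt_one h1
  rw [← hasSum_nat_add_iff' 1] at this
  simp only [Finset.range_one, Finset.sum_singleton, Nat.cast_zero, zero_mul, sub_zero] at this
  have e : (fun k => (nn (m,k) : ℝ) ^ 1 * aw t (m, k)) = fun n : ℕ => ((n + 1 : ℕ):ℝ) * Real.exp (-(↑m * t)) ^ (n + 1) := by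
    funext k
    rw [aw_row, nn, pow_succ]
    push_cast
    field_simp
    ring
  rw [e]; exact this

lemma mean_upper {x : ℝ} (hx : 0 < x) : Real.exp (-x) / (1 - Real.exp (-x)) ^ 2 ≤ 1 / x ^ 2 := by
  have h5 : Real.exp (-x) < 1 := by rw [Real.exp_lt_one_iff]; linarith
  rw [div_le_div_iff₀ (by have : 0 < 1 - Real.exp (-x) := by linarith
                          positivity) (by positivity)]
  have h := Real.self_le_sinh_iff.2 (half_pos hx).le
  rw [Real.sinh_eq] at h
  have e1 : Real.exp (-x) = Real.exp (-(x/2)) ^ 2 := by rw [← Real.exp_nat_mul]; congr 1; push_cast; ring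
  have e2 : Real.exp (x/2) * Real.exp (-(x/2)) = 1 := by rw [← Real.exp_add]; simp
  have h0 := Real.exp_pos (-(x/2))
  rw [e1] at *
  set u := Real.exp (-(x/2))
  have h3 : u * x ≤ 1 - u^2 := by nlinarith
  calc u^2 * x^2 = (u * x)^2 := by ring
    _ ≤ (1 - u^2)^2 := by gcongr
    _ = _ := by ring

lemma mean_lower {x : ℝ} (hx : 0 < x) : 1 / x ^ 2 - 1 / x ≤ Real.exp (-x) / (1 - Real.exp (-x)) ^ 2 := by
  have h5 : Real.exp (-x) < 1 := by rw [Real.exp_lt_one_iff]; linarith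
  have h6 := Real.add_one_le_exp (-x)
  have h7 : 0 < 1 - Real.exp (-x) := by linarith
  calc 1 / x ^ 2 - 1 / x = (-x + 1) / x ^ 2 := by field_simp; ring
    _ ≤ Real.exp (-x) / x ^ 2 := by gcongr
    _ ≤ _ := by
      have := Real.exp_pos (-x)
      gcongr
      linarith

lemma min_rpow {x : ℝ} (hx : 0 < x) : min (1/x) (1/x^2) ≤ x ^ (-(5/4) : ℝ) := by
  rcases le_total x 1 with h | h
  · refine (min_le_left _ _).trans ?_
    rw [one_div, ← Real.rpow_neg_one]
    exact Real.rpow_le_rpow_of_exponent_ge hx h (by norm_num)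
  · refine (min_le_right _ _).trans ?_
    have : 1 / x^2 = x ^ (-2 : ℝ) := by rw [Real.rpow_neg hx.le, one_div]; norm_cast
    rw [this]
    exact Real.rpow_le_rpow_of_exponent_le h (by norm_num)

lemma mean_bound : ∃ C > (0:ℝ), ∀ t > (0:ℝ), |Real.pi ^ 2 / (6 * t ^ 2) - mom 1 t| ≤ C * t ^ (-(5/4) : ℝ) := by
  have hS : Summable fun m : ℕ => (m : ℝ) ^ (-(5/4) : ℝ) := Real.summable_nat_rpow.2 (by norm_num)
  refine ⟨(∑' m : ℕ, (m : ℝ) ^ (-(5/4) : ℝ)) + 1, ?_, ?_⟩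
  · have : 0 ≤ ∑' m : ℕ, (m : ℝ) ^ (-(5/4) : ℝ) := tsum_nonneg fun m => by positivity
    linarith
  intro t ht
  have hsum := mom_summable ht 1
  have h1 : HasSum (fun m : ℕ => ∑' k, (nn (m,k) : ℝ) ^ 1 * aw t (m, k)) (mom 1 t) := by
    have := hsum.hasSum
    exact this.prod_fiberwise (fun m => (hsum.prod_factor m).hasSum)
  have h2 : HasSum (fun m : ℕ => 1 / (m:ℝ)^2 * (t^2)⁻¹) (Real.pi ^ 2 / (6 * t ^ 2)) := by
    have := hasSum_zeta_two.mul_right (t^2)⁻¹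
    have e : Real.pi ^ 2 / (6 * t ^ 2) = Real.pi ^ 2 / 6 * (t^2)⁻¹ := by field_simp
    rw [e]; exact this
  have h3 := h2.sub h1
  have hb : ∀ m : ℕ, |1 / (m:ℝ)^2 * (t^2)⁻¹ - ∑' k, (nn (m,k) : ℝ) ^ 1 * aw t (m, k)| ≤
      (m : ℝ) ^ (-(5/4) : ℝ) * t ^ (-(5/4) : ℝ) := by
    intro m
    rcases Nat.eq_zero_or_pos m with rfl | hm
    · simp [nn]
    · have hm' : (0:ℝ) < m := by exact_mod_cast hm
      have hx : 0 < (m:ℝ) * t := by positivity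
      rw [(mean_row ht m hm).tsum_eq, ← Real.mul_rpow hm'.le ht.le]
      have e : 1 / (m:ℝ)^2 * (t^2)⁻¹ = 1 / (m * t)^2 := by field_simp
      rw [e]
      have u := mean_upper hx
      have l := mean_lower hx
      have h0 : 0 ≤ Real.exp (-(m * t)) / (1 - Real.exp (-(m * t))) ^ 2 := by positivity
      rw [abs_of_nonneg (by linarith)]
      refine le_trans (le_min ?_ ?_) (min_rpow hx) <;> linarith
  have h4 : |Real.pi ^ 2 / (6 * t ^ 2) - mom 1 t| ≤ ∑' m : ℕ, (m : ℝ) ^ (-(5/4) : ℝ) * t ^ (-(5/4) : ℝ) := by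
    rw [← h3.tsum_eq, ← Real.norm_eq_abs]
    exact tsum_of_norm_bounded (hS.mul_right _).hasSum hb
  rw [tsum_mul_right] at h4
  have : 0 ≤ t ^ (-(5/4) : ℝ) := by positivity
  linarith

end SCCD


noncomputable section SCCE


open Complex

def eit (n : ℤ) (θ : ℝ) : ℂ := Complex.exp (((n * θ : ℝ) : ℂ) * I)

lemma eit_norm (n : ℤ) (θ : ℝ) : ‖eit n θ‖ = 1 := Complex.norm_exp_ofReal_mul_I _

lemma eit_add (n m : ℤ) (θ : ℝ) : eit n θ * eit m θ = eit (n + m) θ := by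
  rw [eit, eit, eit, ← Complex.exp_add]; congr 1; push_cast; ring

lemma eit_cont (n : ℤ) : Continuous (eit n) := by unfold eit; fun_prop

def cfe (t θ : ℝ) : ℂ := ∑' x, (aw t x : ℂ) * (eit (nn x) θ - 1)
def cf (t θ : ℝ) : ℂ := Complex.exp (cfe t θ)

def PP (t : ℝ) : ℝ := ∑' n : ℕ, (pn n : ℝ) * Real.exp (-t) ^ n

def zz (t θ : ℝ) : ℂ := (Real.exp (-t) : ℂ) * eit 1 θ

lemma eit_pow (θ : ℝ) (n : ℕ) : eit 1 θ ^ n = eit n θ := by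
  rw [eit, eit, ← Complex.exp_nat_mul]; congr 1; push_cast; ring

lemma zz_norm (t θ : ℝ) : ‖zz t θ‖ = Real.exp (-t) := by
  rw [zz, norm_mul, eit_norm, Complex.norm_real, mul_one, Real.norm_of_nonneg (Real.exp_pos _).le]

lemma zz_lt {t : ℝ} (ht : 0 < t) (θ : ℝ) : ‖zz t θ‖ < 1 := by
  rw [zz_norm, Real.exp_lt_one_iff]; linarith

lemma zz_term (t θ : ℝ) (x : ℕ × ℕ) : (zz t θ ^ ((x.2 + 1) * x.1)) / (x.1 : ℂ) =
    (aw t x : ℂ) * eit (nn x) θ := by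
  have : Real.exp (-(nn x : ℝ) * t) = Real.exp (-t) ^ (nn x) := by
    rw [← Real.exp_nat_mul]; congr 1; ring
  rw [aw, this]
  change (zz t θ ^ (nn x)) / _ = _
  rw [zz, mul_pow, eit_pow]
  push_cast; ring

lemma aw_eit_summable {t : ℝ} (ht : 0 < t) (θ : ℝ) : Summable fun x => (aw t x : ℂ) * eit (nn x) θ := by
  apply Summable.of_norm
  simp_rw [norm_mul, eit_norm, mul_one, Complex.norm_real]
  exact (aw_summable ht).norm

lemma cfe_summable {t : ℝ} (ht : 0 < t) (θ : ℝ) :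
    Summable fun x => (aw t x : ℂ) * (eit (nn x) θ - 1) := by
  have h := (aw_eit_summable ht θ).sub (Complex.hasSum_ofReal.2 (aw_summable ht).hasSum).summable
  refine h.congr (fun x => ?_)
  ring

lemma Pz_zz {t : ℝ} (ht : 0 < t) (θ : ℝ) :
    Pz (zz t θ) = Complex.exp (∑' x, (aw t x : ℂ) * eit (nn x) θ) := by
  apply Pz_exp (zz_lt ht θ)
  simp_rw [zz_term]
  exact (aw_eit_summable ht θ).hasSum

lemma eit_zero (n : ℤ) : eit n 0 = 1 := by simp [eit]

lemma Pz_zero (t : ℝ) : Pz (zz t 0) = PP t := by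
  rw [Pz, PP, Complex.ofReal_tsum]
  congr 1; funext n
  rw [zz, eit_zero]; push_cast; ring

lemma PP_summable {t : ℝ} (ht : 0 < t) : Summable fun n : ℕ => (pn n : ℝ) * Real.exp (-t) ^ n :=
  pn_summable (Real.exp_pos _).le (by rw [Real.exp_lt_one_iff]; linarith)

lemma PP_pos {t : ℝ} (ht : 0 < t) : 0 < PP t := by
  refine (PP_summable ht).tsum_pos (fun n => by positivity) 0 ?_
  have : 0 < pn 0 := Fintype.card_pos
  positivity

lemma cf_eq {t : ℝ} (ht : 0 < t) (θ : ℝ) : cf t θ = Pz (zz t θ) / PP t := by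
  rw [← Pz_zero, Pz_zz ht, Pz_zz ht, ← Complex.exp_sub, cf, cfe,
    ← (aw_eit_summable ht θ).tsum_sub (aw_eit_summable ht 0)]
  congr 2; funext x; rw [eit_zero]; ring

def ww (t : ℝ) (n : ℤ) : ℝ := (partitionCount n : ℝ) * Real.exp (-(n * t)) / PP t

lemma ww_nonneg {t : ℝ} (ht : 0 < t) (n : ℤ) : 0 ≤ ww t n := by
  have := PP_pos ht
  unfold ww; positivity

lemma ww_nat (t : ℝ) (n : ℕ) : ww t n = (pn n : ℝ) * Real.exp (-t) ^ n / PP t := by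
  rw [ww, partitionCount, if_pos (by omega), ← Real.exp_nat_mul, pn]
  simp

lemma ww_summable {t : ℝ} (ht : 0 < t) : Summable fun n : ℕ => ww t n := by
  simp_rw [ww_nat]
  exact (PP_summable ht).div_const _

lemma cf_hasSum {t : ℝ} (ht : 0 < t) (θ : ℝ) : HasSum (fun n : ℕ => (ww t n : ℂ) * eit n θ) (cf t θ) := by
  have h : Summable fun n : ℕ => (ww t n : ℂ) * eit n θ := by
    apply Summable.of_norm
    simp_rw [norm_mul, eit_norm, mul_one, Complex.norm_real]
    exact (ww_summable ht).norm
  convert h.hasSum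
  rw [cf_eq ht, Pz, ← tsum_div_const]
  congr 1; funext n
  rw [ww_nat, zz, mul_pow, eit_pow]
  push_cast; ring

lemma cf_cont {t : ℝ} (ht : 0 < t) : Continuous (cf t) := by
  have : cf t = fun θ => ∑' n : ℕ, (ww t n : ℂ) * eit n θ := by
    funext θ; exact (cf_hasSum ht θ).tsum_eq.symm
  rw [this]
  refine continuous_tsum (fun n => ?_) (ww_summable ht) ?_
  · exact continuous_const.mul (eit_cont n)
  · intro n θ
    rw [norm_mul, eit_norm, mul_one, Complex.norm_real, Real.norm_of_nonneg (ww_nonneg ht _)]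

lemma eit_int (n : ℤ) : ∫ θ in (-Real.pi)..Real.pi, eit n θ = if n = 0 then ((2 * Real.pi : ℝ) : ℂ) else 0 := by
  split_ifs with h
  · subst h
    simp [eit]
    ring
  · have hc : (n : ℂ) * I ≠ 0 := by simp [h]
    have : ∀ θ : ℝ, eit n θ = Complex.exp ((n * I) * θ) := by
      intro θ; rw [eit]; congr 1; push_cast; ring
    simp_rw [this]
    rw [integral_exp_mul_complex hc, div_eq_zero_iff]
    left
    rw [sub_eq_zero, Complex.exp_eq_exp_iff_exists_int]
    exact ⟨n, by push_cast; ring⟩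

lemma fourier_inv {t : ℝ} (ht : 0 < t) (n : ℤ) :
    ∫ θ in (-Real.pi)..Real.pi, cf t θ * eit (-n) θ = ((2 * Real.pi * ww t n : ℝ) : ℂ) := by
  have h : HasSum (fun k : ℕ => ∫ θ in (-Real.pi)..Real.pi, ((ww t k : ℂ) * eit k θ) * eit (-n) θ)
      (∫ θ in (-Real.pi)..Real.pi, cf t θ * eit (-n) θ) := by
    refine intervalIntegral.hasSum_integral_of_dominated_convergence (fun k _ => ww t k) ?_ ?_ ?_ ?_ ?_
    · intro k
      exact ((continuous_const.mul (eit_cont k)).mul (eit_cont _)).aestronglyMeasurable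
    · intro k
      filter_upwards with θ _
      rw [norm_mul, norm_mul, eit_norm, eit_norm, Complex.norm_real, Real.norm_of_nonneg (ww_nonneg ht _)]
      simp
    · filter_upwards with θ _
      exact ww_summable ht
    · exact intervalIntegrable_const
    · filter_upwards with θ _
      exact (cf_hasSum ht θ).mul_right _
  have h2 : ∀ k : ℕ, ∫ θ in (-Real.pi)..Real.pi, ((ww t k : ℂ) * eit k θ) * eit (-n) θ =
      if (k:ℤ) = n then ((2 * Real.pi * ww t n : ℝ) : ℂ) else 0 := by
    intro k
    simp_rw [mul_assoc, eit_add]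
    rw [intervalIntegral.integral_const_mul, eit_int]
    by_cases hk : (k:ℤ) = n
    · rw [if_pos (by omega), if_pos hk, hk]; push_cast; ring
    · rw [if_neg (by omega), if_neg hk, mul_zero]
  simp_rw [h2] at h
  refine h.unique ?_
  rcases lt_or_ge n 0 with hn | hn
  · have : ww t n = 0 := by rw [ww, partitionCount, if_neg (by omega)]; simp
    rw [this]
    simp
  · lift n to ℕ using hn
    convert hasSum_ite_eq n ((2 * Real.pi * ww t n : ℝ) : ℂ) using 3
    simp
end SCCE


noncomputable section SCCF


open Complex

lemma eit_re (n : ℤ) (θ : ℝ) : (eit n θ).re = Real.cos (n * θ) := by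
  rw [eit, Complex.exp_ofReal_mul_I_re]

lemma geo_hasSum {t : ℝ} (ht : 0 < t) (θ : ℝ) :
    HasSum (fun k : ℕ => Real.exp (-t) ^ k * Real.cos (k * θ))
      ((1 - Real.exp (-t) * Real.cos θ) / (1 - 2 * Real.exp (-t) * Real.cos θ + Real.exp (-t) ^ 2)) := by
  have h := Complex.hasSum_re (hasSum_geometric_of_norm_lt_one (zz_lt ht θ))
  convert h using 1
  · funext k
    rw [zz, mul_pow, eit_pow, ← Complex.ofReal_pow, Complex.re_ofReal_mul, eit_re]
    simp
  · have hs := Real.sin_sq_add_cos_sq θ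
    have e1 : (1 - zz t θ).re = 1 - Real.exp (-t) * Real.cos θ := by
      rw [Complex.sub_re, zz, Complex.re_ofReal_mul, eit_re]; simp
    have e2 : (1 - zz t θ).im = - (Real.exp (-t) * Real.sin θ) := by
      rw [Complex.sub_im, zz, Complex.im_ofReal_mul, eit, Complex.exp_ofReal_mul_I_im]; simp
    rw [Complex.inv_re, Complex.normSq_apply, e1, e2]
    congr 1
    linear_combination (-Real.exp (-t)^2) * hs

def Ee (t θ : ℝ) : ℝ := (1 - Real.exp (-t))⁻¹ -
  (1 - Real.exp (-t) * Real.cos θ) / (1 - 2 * Real.exp (-t) * Real.cos θ + Real.exp (-t) ^ 2)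

lemma Ee_hasSum {t : ℝ} (ht : 0 < t) (θ : ℝ) :
    HasSum (fun k : ℕ => aw t (1,k) * (1 - Real.cos (nn (1,k) * θ))) (Ee t θ) := by
  have h0 := hasSum_geometric_of_lt_one (Real.exp_pos (-t)).le
    (by rw [Real.exp_lt_one_iff]; linarith)
  have h1 := h0.sub (geo_hasSum ht θ)
  have h2 : HasSum (fun k : ℕ => Real.exp (-t) ^ k * (1 - Real.cos (k * θ))) (Ee t θ) := by
    refine h1.congr_fun ?_ |> id
    intro k; ring
  rw [← hasSum_nat_add_iff' 1] at h2
  simp only [Finset.range_one, Finset.sum_singleton, Nat.cast_zero, zero_mul, sub_zero, Real.cos_zero,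
    sub_self, mul_zero] at h2
  have e : (fun k : ℕ => aw t (1,k) * (1 - Real.cos (nn (1,k) * θ))) =
      fun n : ℕ => Real.exp (-t) ^ (n + 1) * (1 - Real.cos (((n + 1 : ℕ) : ℝ) * θ)) := by
    funext k
    rw [aw_row, nn]
    simp only [Nat.cast_one, one_mul, div_one, mul_one]
    ring
  rw [e]; exact h2

lemma cfe_re {t : ℝ} (ht : 0 < t) (θ : ℝ) :
    HasSum (fun x => aw t x * (1 - Real.cos (nn x * θ))) (-(cfe t θ).re) := by
  have := (Complex.hasSum_re (cfe_summable ht θ).hasSum).neg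
  have e : (fun x => aw t x * (1 - Real.cos (nn x * θ))) =
      fun x => -((aw t x : ℂ) * (eit (nn x) θ - 1)).re := by
    funext x
    rw [Complex.re_ofReal_mul, Complex.sub_re, eit_re]
    simp
    ring
  rw [e]; exact this

lemma cfe_re_le {t : ℝ} (ht : 0 < t) (θ : ℝ) : (cfe t θ).re ≤ - Ee t θ := by
  have h := cfe_re ht θ
  have hn : ∀ x, 0 ≤ aw t x * (1 - Real.cos (nn x * θ)) := fun x =>
    mul_nonneg (aw_nonneg t x) (by have := Real.cos_le_one (nn x * θ); linarith)
  have h2 := tsum_comp_le_tsum_of_inj h.summable hn (i := fun k : ℕ => (1, k))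
    (fun a b hab => by simpa using hab)
  rw [h.tsum_eq] at h2
  have h3 := (Ee_hasSum ht θ).tsum_eq
  change ∑' k : ℕ, aw t (1,k) * (1 - Real.cos (nn (1,k) * θ)) ≤ _ at h2
  rw [h3] at h2
  linarith

lemma cfe_re_nonpos {t : ℝ} (ht : 0 < t) (θ : ℝ) : (cfe t θ).re ≤ 0 := by
  have := (cfe_re ht θ).nonneg (fun x =>
    mul_nonneg (aw_nonneg t x) (by have := Real.cos_le_one (nn x * θ); linarith))
  linarith

lemma cf_norm_le_one {t : ℝ} (ht : 0 < t) (θ : ℝ) : ‖cf t θ‖ ≤ 1 := by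
  rw [cf, Complex.norm_exp, Real.exp_le_one_iff]
  exact cfe_re_nonpos ht θ

lemma Ee_lower {t : ℝ} (ht : 0 < t) (ht1 : t ≤ 1) {θ : ℝ} (hθ : |θ| ≤ Real.pi) :
    θ ^ 2 / (15 * t * (t ^ 2 + θ ^ 2)) ≤ Ee t θ := by
  have hv : θ ^ 2 / 5 ≤ 1 - Real.cos θ := by
    have h := Real.cos_le_one_sub_mul_cos_sq hθ
    have hp : Real.pi ^ 2 ≤ 10 := by nlinarith [Real.pi_lt_d2, Real.pi_pos]
    have : (1:ℝ) / 5 ≤ 2 / Real.pi ^ 2 := by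
      rw [div_le_div_iff₀ (by norm_num) (by positivity)]; linarith
    nlinarith [sq_nonneg θ]
  have hx1 : 1 - t ≤ Real.exp (-t) := by have := Real.add_one_le_exp (-t); linarith
  have hx2 : (1:ℝ)/3 ≤ Real.exp (-t) := by
    have h1 : Real.exp (-1) ≤ Real.exp (-t) := by gcongr
    have h2 := Real.exp_one_lt_d9
    rw [Real.exp_neg] at h1
    have h3 : (1:ℝ)/3 ≤ (Real.exp 1)⁻¹ := by
      rw [one_div]; gcongr; linarith
    linarith
  have hx3 : Real.exp (-t) < 1 := by rw [Real.exp_lt_one_iff]; linarith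
  set x := Real.exp (-t) with hx
  set v := 1 - Real.cos θ with hvd
  have hc : Real.cos θ = 1 - v := by rw [hvd]; ring
  have hv0 : 0 ≤ v := le_trans (by positivity) hv
  have hD : 1 - 2 * x * Real.cos θ + x ^ 2 = (1 - x)^2 + 2 * x * v := by rw [hc]; ring
  have h1x : 0 < 1 - x := by linarith
  have hDpos : 0 < (1 - x)^2 + 2 * x * v := by positivity
  have hE : Ee t θ = x * (1 + x) * v / ((1 - x) * ((1 - x)^2 + 2 * x * v)) := by
    rw [Ee, ← hx, hD, hc]
    field_simp
    ring
  rw [hE]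
  rcases eq_or_lt_of_le hv0 with h0 | hvpos
  · rw [← h0] at hv ⊢
    have : θ ^ 2 = 0 := by nlinarith [sq_nonneg θ]
    rw [this]; simp
  have hθ2 := sq_nonneg θ
  calc θ ^ 2 / (15 * t * (t ^ 2 + θ ^ 2)) = (1/3) * (θ^2/5) / (t * (t^2 + θ^2)) := by field_simp; ring
    _ ≤ (1/3) * v / (t * (t ^ 2 + 2 * v)) := by
      rw [div_le_div_iff₀ (by positivity) (by positivity)]
      have : θ^2/5 * (t^2 + 2 * v) ≤ v * (t^2 + θ^2) := by nlinarith [mul_nonneg hv0 hθ2]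
      have := mul_le_mul_of_nonneg_left this ht.le
      linarith
    _ ≤ (x * (1 + x)) * v / ((1 - x) * ((1 - x)^2 + 2 * x * v)) := by
      gcongr
      · nlinarith
      · linarith
      · linarith
      · nlinarith

def A0 : ℝ := 72000 * 30 ^ 6

lemma cf_decay {t : ℝ} (ht : 0 < t) (ht1 : t ≤ 1) {θ : ℝ} (hθ : |θ| ≤ Real.pi) :
    ‖cf t θ‖ * θ ^ 4 ≤ A0 * t ^ 6 := by
  rcases eq_or_ne θ 0 with rfl | h0
  · simp [A0]; positivity
  have hE := Ee_lower ht ht1 hθ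
  have hn : ‖cf t θ‖ ≤ Real.exp (-Ee t θ) := by
    rw [cf, Complex.norm_exp]; gcongr; exact cfe_re_le ht θ
  have hθ2 : 0 < θ ^ 2 := by positivity
  have hE0 : 0 < Ee t θ := lt_of_lt_of_le (by positivity) hE
  have key : ∀ p : ℕ, Real.exp (-Ee t θ) * Ee t θ ^ p ≤ p.factorial := by
    intro p
    have := Real.pow_div_factorial_le_exp (Ee t θ) hE0.le p
    rw [div_le_iff₀ (by exact_mod_cast p.factorial_pos)] at this
    calc _ ≤ Real.exp (-Ee t θ) * (Real.exp (Ee t θ) * p.factorial) := by gcongr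
      _ = _ := by rw [← mul_assoc, ← Real.exp_add]; simp
  rcases le_total (θ^2) (t^2) with h | h
  · have h1 : θ ^ 2 / (30 * t ^ 3) ≤ Ee t θ := by
      refine le_trans ?_ hE
      apply div_le_div_of_nonneg_left hθ2.le (by positivity)
      nlinarith
    have h2 := key 2
    have h3 : Real.exp (-Ee t θ) * (θ ^ 2 / (30 * t ^ 3)) ^ 2 ≤ 2 := by
      refine le_trans ?_ (h2.trans (by norm_num [Nat.factorial]))
      gcongr
    calc ‖cf t θ‖ * θ ^ 4 ≤ Real.exp (-Ee t θ) * θ^4 := by gcongr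
      _ = (Real.exp (-Ee t θ) * (θ ^ 2 / (30 * t ^ 3)) ^ 2) * (900 * t ^ 6) := by field_simp; norm_num
      _ ≤ 2 * (900 * t ^ 6) := by gcongr
      _ ≤ A0 * t ^ 6 := by
        rw [← mul_assoc]; gcongr; norm_num [A0]
  · have h1 : 1 / (30 * t) ≤ Ee t θ := by
      refine le_trans ?_ hE
      rw [div_le_div_iff₀ (by positivity) (by positivity)]
      nlinarith
    have h2 := key 6
    have h3 : Real.exp (-Ee t θ) * (1 / (30 * t)) ^ 6 ≤ 720 := by
      refine le_trans ?_ (h2.trans (by norm_num [Nat.factorial]))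
      gcongr
    have h4 : θ ^ 4 ≤ 100 := by
      have hp : Real.pi ^ 2 ≤ 10 := by nlinarith [Real.pi_lt_d2, Real.pi_pos]
      have : θ ^ 2 ≤ Real.pi ^ 2 := by rw [← sq_abs]; gcongr
      nlinarith
    calc ‖cf t θ‖ * θ ^ 4 ≤ Real.exp (-Ee t θ) * 100 := by gcongr
      _ = (Real.exp (-Ee t θ) * (1 / (30 * t)) ^ 6) * (100 * 30 ^ 6 * t ^ 6) := by field_simp
      _ ≤ 720 * (100 * 30 ^ 6 * t ^ 6) := by gcongr
      _ ≤ A0 * t ^ 6 := by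
        rw [A0]; apply le_of_eq; ring

lemma exp_diff {a b : ℂ} (ha : a.re ≤ 0) (hb : b.re ≤ 0) :
    ‖Complex.exp a - Complex.exp b‖ ≤ ‖a - b‖ := by
  have := Convex.norm_image_sub_le_of_norm_deriv_le (𝕜 := ℂ) (f := Complex.exp) (s := {c | c.re ≤ 0})
    (x := b) (y := a) (C := 1) (fun x _ => Complex.differentiableAt_exp)
    (fun x hx => by
      rw [Complex.deriv_exp, Complex.norm_exp, Real.exp_le_one_iff]; exact hx)
    (convex_halfSpace_re_le 0) hb ha
  simpa using this

lemma taylor3 (y : ℝ) : ‖Complex.exp (y * I) - 1 - y * I + y ^ 2 / 2‖ ≤ 4 * |y| ^ 3 := by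
  rcases le_total |y| 1 with h | h
  · have hn : ‖(y:ℂ) * I‖ = |y| := by simp
    have := Complex.exp_bound (x := (y:ℂ) * I) (by rw [hn]; exact h) (n := 3) (by norm_num)
    rw [hn] at this
    simp only [Finset.sum_range_succ, Finset.sum_range_zero] at this
    have e : Complex.exp (y * I) - 1 - y * I + y ^ 2 / 2 = Complex.exp (↑y * I) -
        (0 + (↑y * I) ^ 0 / ((Nat.factorial 0 : ℕ):ℂ) + (↑y * I) ^ 1 / ((Nat.factorial 1 : ℕ):ℂ) + (↑y * I) ^ 2 / ((Nat.factorial 2 : ℕ):ℂ)) := by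
      simp [mul_pow]; ring
    rw [e]
    refine this.trans ?_
    norm_num [Nat.factorial]
    have : 0 ≤ |y|^3 := by positivity
    linarith
  · have h1 : ‖Complex.exp (y * I)‖ = 1 := Complex.norm_exp_ofReal_mul_I y
    have h2 : ‖(y:ℂ) * I‖ = |y| := by simp
    have h3 : ‖(y:ℂ) ^ 2 / 2‖ = |y| ^ 2 / 2 := by simp
    calc _ ≤ ‖Complex.exp (y * I)‖ + ‖(1:ℂ)‖ + ‖(y:ℂ) * I‖ + ‖(y:ℂ) ^ 2 / 2‖ :=
          (norm_add_le _ _).trans (by gcongr; exact (norm_sub_le _ _).trans (by gcongr; exact norm_sub_le _ _))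
      _ = 1 + 1 + |y| + |y|^2/2 := by rw [h1, h2, h3]; simp
      _ ≤ _ := by
        have a1 : |y| ≤ |y|^2 := by nlinarith
        have a2 : |y|^2 ≤ |y|^3 := by nlinarith [sq_nonneg |y|]
        linarith

lemma cf_gauss {t : ℝ} (ht : 0 < t) (θ : ℝ) :
    ‖cf t θ - Complex.exp (((mom 1 t * θ : ℝ):ℂ) * I - ((mom 2 t * θ ^ 2 / 2 : ℝ) : ℂ))‖ ≤ 4 * mom 3 t * |θ| ^ 3 := by
  rw [cf]
  refine (exp_diff (cfe_re_nonpos ht θ) ?_).trans ?_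
  · have := mom_nonneg 2 t
    rw [Complex.sub_re, Complex.re_ofReal_mul, Complex.I_re, Complex.ofReal_re]
    have : 0 ≤ mom 2 t * θ ^ 2 / 2 := by positivity
    linarith
  have h1 := (Complex.hasSum_ofReal.2 (mom_summable ht 1).hasSum).mul_right ((θ:ℂ) * I)
  have h2 := (Complex.hasSum_ofReal.2 (mom_summable ht 2).hasSum).mul_right ((θ:ℂ)^2 / 2)
  have h3 := (cfe_summable ht θ).hasSum.sub (h1.sub h2)
  have h4 := (mom_summable ht 3).hasSum.mul_left (4 * |θ|^3)
  have e : cfe t θ - (((mom 1 t * θ : ℝ):ℂ) * I - ((mom 2 t * θ ^ 2 / 2 : ℝ) : ℂ)) =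
    ∑' x, (aw t x : ℂ) * (eit (nn x) θ - 1) - (((∑' x, (nn x : ℝ) ^ 1 * aw t x : ℝ):ℂ) * ((θ:ℂ) * I) -
      ((∑' x, (nn x : ℝ) ^ 2 * aw t x : ℝ):ℂ) * ((θ:ℂ)^2 / 2)) := by
    rw [cfe, mom, mom]; push_cast; ring
  rw [e, ← h3.tsum_eq]
  have e2 : 4 * mom 3 t * |θ| ^ 3 = 4 * |θ|^3 * ∑' x, (nn x : ℝ) ^ 3 * aw t x := by rw [mom]; ring
  rw [e2]
  refine tsum_of_norm_bounded h4 (fun x => ?_)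
  have ht3 := taylor3 (nn x * θ)
  have e3 : (aw t x : ℂ) * (eit (nn x) θ - 1) - ((((nn x : ℝ) ^ 1 * aw t x : ℝ):ℂ) * ((θ:ℂ) * I) -
      (((nn x : ℝ) ^ 2 * aw t x : ℝ):ℂ) * ((θ:ℂ)^2 / 2)) = (aw t x : ℂ) *
      (Complex.exp ((nn x * θ : ℝ) * I) - 1 - (nn x * θ : ℝ) * I + (nn x * θ : ℝ) ^ 2 / 2) := by
    rw [eit]; push_cast; ring
  rw [e3, norm_mul, Complex.norm_real, Real.norm_of_nonneg (aw_nonneg t x)]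
  calc _ ≤ aw t x * (4 * |(nn x:ℝ) * θ|^3) := by gcongr; exact aw_nonneg t x
    _ = _ := by rw [abs_mul, mul_pow, Nat.abs_cast]; ring
end SCCF


noncomputable section SCCG


open Complex

def ss (t : ℝ) : ℝ := t * Real.sqrt t

lemma ss_pos {t : ℝ} (ht : 0 < t) : 0 < ss t := by unfold ss; positivity

lemma ss_sq {t : ℝ} (ht : 0 < t) : ss t ^ 2 = t ^ 3 := by
  rw [ss, mul_pow, Real.sq_sqrt ht.le]; ring

lemma cf_dom {t : ℝ} (ht : 0 < t) (ht1 : t ≤ 1) {θ : ℝ} (hθ : |θ| ≤ Real.pi) :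
    ‖cf t θ‖ ≤ 2 * (A0 + 1) * (ss t ^ 4 / (ss t ^ 2 + θ ^ 2) ^ 2) := by
  have h1 := cf_decay ht ht1 hθ
  have h2 := cf_norm_le_one ht θ
  have hs := ss_pos ht
  have e : t ^ 6 = ss t ^ 4 := by
    calc t ^ 6 = (t ^ 3) ^ 2 := by ring
      _ = _ := by rw [← ss_sq ht]; ring
  rw [e] at h1
  rw [← mul_div_assoc, le_div_iff₀ (by positivity)]
  have h3 : (ss t ^ 2 + θ ^ 2) ^ 2 ≤ 2 * (ss t ^ 4 + θ ^ 4) := by nlinarith [sq_nonneg (ss t ^ 2 - θ ^ 2)]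
  have hs4 : 0 < ss t ^ 4 := by positivity
  calc ‖cf t θ‖ * (ss t ^ 2 + θ ^ 2) ^ 2 ≤ ‖cf t θ‖ * (2 * (ss t ^ 4 + θ ^ 4)) := by gcongr
    _ = 2 * (‖cf t θ‖ * ss t ^ 4 + ‖cf t θ‖ * θ ^ 4) := by ring
    _ ≤ 2 * (1 * ss t ^ 4 + A0 * ss t ^ 4) := by gcongr
    _ = _ := by ring

lemma ker_deriv {s : ℝ} (hs : 0 < s) (θ : ℝ) :
    HasDerivAt (fun θ => -(s ^ 4 / 2) * (s ^ 2 + θ ^ 2)⁻¹) (θ * (s ^ 4 / (s ^ 2 + θ ^ 2) ^ 2)) θ := by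
  have h0 : s ^ 2 + θ ^ 2 ≠ 0 := by positivity
  have h1 : HasDerivAt (fun θ : ℝ => s ^ 2 + θ ^ 2) (2 * θ) θ := by
    simpa using (hasDerivAt_pow 2 θ).const_add (s ^ 2)
  refine ((h1.inv h0).const_mul (-(s ^ 4 / 2))).congr_deriv ?_
  field_simp

lemma ker_cont {s : ℝ} (hs : 0 < s) : Continuous fun θ : ℝ => θ * (s ^ 4 / (s ^ 2 + θ ^ 2) ^ 2) := by
  have : ∀ θ : ℝ, (s ^ 2 + θ ^ 2) ^ 2 ≠ 0 := fun θ => by positivity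
  exact continuous_id.mul (continuous_const.div (by fun_prop) this)

lemma ker_int {s : ℝ} (hs : 0 < s) :
    ∫ θ in (0:ℝ)..Real.pi, θ * (s ^ 4 / (s ^ 2 + θ ^ 2) ^ 2) ≤ s ^ 2 / 2 := by
  rw [intervalIntegral.integral_eq_sub_of_hasDerivAt (fun θ _ => ker_deriv hs θ)
    ((ker_cont hs).intervalIntegrable _ _)]
  have h1 : 0 ≤ (s ^ 4 / 2) * (s ^ 2 + Real.pi ^ 2)⁻¹ := by positivity
  have h2 : (s ^ 4 / 2) * (s ^ 2 + 0 ^ 2)⁻¹ = s ^ 2 / 2 := by field_simp; ring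
  linarith

lemma ker_int' {s : ℝ} (hs : 0 < s) :
    ∫ θ in (-Real.pi)..0, -(θ * (s ^ 4 / (s ^ 2 + θ ^ 2) ^ 2)) ≤ s ^ 2 / 2 := by
  refine le_trans (le_of_eq ?_) (ker_int hs)
  have := intervalIntegral.integral_comp_neg (a := 0) (b := Real.pi) (fun θ : ℝ => -(θ * (s ^ 4 / (s ^ 2 + θ ^ 2) ^ 2)))
  rw [neg_zero] at this
  rw [← this]
  congr 1; funext θ
  ring

lemma eit_sub (n : ℤ) (θ : ℝ) : ‖eit (-n) θ - eit (-(n-1)) θ‖ ≤ |θ| := by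
  have e : eit (-n) θ - eit (-(n-1)) θ = - (eit (-n) θ * (eit 1 θ - 1)) := by
    rw [mul_sub, eit_add, mul_one, show -n + 1 = -(n-1) by ring]; ring
  rw [e, norm_neg, norm_mul, eit_norm, one_mul, eit]
  have := Real.norm_exp_I_mul_ofReal_sub_one_le (x := θ)
  rw [mul_comm] at this
  simpa using this

lemma ww_lip {t : ℝ} (ht : 0 < t) (ht1 : t ≤ 1) (n : ℤ) :
    |ww t n - ww t (n-1)| ≤ 2 * (A0 + 1) * t ^ 3 := by
  have hc := cf_cont ht
  have hs := ss_pos ht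
  set f : ℝ → ℂ := fun θ => cf t θ * (eit (-n) θ - eit (-(n-1)) θ) with hf
  have hfc : Continuous f := hc.mul ((eit_cont _).sub (eit_cont _))
  have hi : ∀ a b, IntervalIntegrable f MeasureTheory.volume a b := fun a b => hfc.intervalIntegrable a b
  have hA : 0 < A0 := by norm_num [A0]
  have h1 : ∫ θ in (-Real.pi)..Real.pi, f θ = ((2 * Real.pi * (ww t n - ww t (n-1)) : ℝ) : ℂ) := by
    have : ∀ θ, f θ = cf t θ * eit (-n) θ - cf t θ * eit (-(n-1)) θ := fun θ => mul_sub _ _ _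
    simp_rw [this]
    rw [intervalIntegral.integral_sub, fourier_inv ht, fourier_inv ht]
    · push_cast; ring
    · exact (hc.mul (eit_cont _)).intervalIntegrable _ _
    · exact (hc.mul (eit_cont _)).intervalIntegrable _ _
  have hb : ∀ θ, |θ| ≤ Real.pi → ‖f θ‖ ≤ 2 * (A0 + 1) * (|θ| * (ss t ^ 4 / (ss t ^ 2 + θ ^ 2) ^ 2)) := by
    intro θ hθ
    rw [hf, norm_mul]
    calc _ ≤ (2 * (A0 + 1) * (ss t ^ 4 / (ss t ^ 2 + θ ^ 2) ^ 2)) * |θ| := by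
          gcongr
          · exact cf_dom ht ht1 hθ
          · exact eit_sub n θ
      _ = _ := by ring
  have hp := Real.pi_pos
  have h2 : ‖∫ θ in (0:ℝ)..Real.pi, f θ‖ ≤ 2 * (A0 + 1) * (ss t ^ 2 / 2) := by
    refine (intervalIntegral.norm_integral_le_of_norm_le hp.le
      (g := fun θ => 2 * (A0 + 1) * (θ * (ss t ^ 4 / (ss t ^ 2 + θ ^ 2) ^ 2))) ?_ ?_).trans ?_
    · filter_upwards with θ hθ
      have := hb θ (by rw [abs_of_pos hθ.1]; exact hθ.2)
      rwa [abs_of_pos hθ.1] at this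
    · exact (continuous_const.mul (ker_cont hs)).intervalIntegrable _ _
    · rw [intervalIntegral.integral_const_mul]
      gcongr
      exact ker_int hs
  have h3 : ‖∫ θ in (-Real.pi)..0, f θ‖ ≤ 2 * (A0 + 1) * (ss t ^ 2 / 2) := by
    refine (intervalIntegral.norm_integral_le_of_norm_le (by linarith)
      (g := fun θ => 2 * (A0 + 1) * (-(θ * (ss t ^ 4 / (ss t ^ 2 + θ ^ 2) ^ 2)))) ?_ ?_).trans ?_
    · filter_upwards with θ hθ
      have := hb θ (by rw [abs_of_nonpos hθ.2]; linarith [hθ.1])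
      rwa [abs_of_nonpos hθ.2, neg_mul] at this
    · exact (continuous_const.mul (ker_cont hs).neg).intervalIntegrable _ _
    · rw [intervalIntegral.integral_const_mul]
      gcongr
      exact ker_int' hs
  rw [← intervalIntegral.integral_add_adjacent_intervals (hi (-Real.pi) 0) (hi 0 Real.pi)] at h1
  have h4 := (norm_add_le _ _).trans (add_le_add h3 h2)
  rw [h1, Complex.norm_real, Real.norm_eq_abs, abs_mul, abs_of_pos (by positivity : 0 < 2 * Real.pi),
    ss_sq ht] at h4
  have h5 : 1 ≤ 2 * Real.pi := by linarith [Real.pi_gt_three]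
  have h6 := abs_nonneg (ww t n - ww t (n-1))
  calc |ww t n - ww t (n-1)| ≤ 2 * Real.pi * |ww t n - ww t (n-1)| := by nlinarith
    _ ≤ _ := h4
    _ = _ := by ring

lemma tail_int {δ A : ℝ} (hδ : 0 < δ) (hδp : δ ≤ Real.pi) (hA : 0 ≤ A) :
    ∫ θ in δ..Real.pi, A * θ⁻¹ ^ 4 ≤ A / (3 * δ ^ 3) := by
  have hd : ∀ θ ∈ Set.uIcc δ Real.pi, HasDerivAt (fun θ : ℝ => -(A/3) * (θ^3)⁻¹) (A * θ⁻¹ ^ 4) θ := by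
    intro θ hθ
    rw [Set.uIcc_of_le hδp] at hθ
    have h0 : 0 < θ := lt_of_lt_of_le hδ hθ.1
    have := ((hasDerivAt_pow 3 θ).inv (by positivity)).const_mul (-(A/3))
    refine this.congr_deriv ?_
    simp
    field_simp
  have hci : ContinuousOn (fun θ : ℝ => A * θ⁻¹ ^ 4) (Set.uIcc δ Real.pi) := by
    intro θ hθ
    exact (((continuousAt_inv₀ (by
      rw [Set.uIcc_of_le hδp] at hθ; linarith [hθ.1])).pow 4).const_mul A |>.continuousWithinAt)
  rw [intervalIntegral.integral_eq_sub_of_hasDerivAt hd hci.intervalIntegrable]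
  have hp := Real.pi_pos
  have h1 : 0 ≤ (A/3) * (Real.pi ^ 3)⁻¹ := by positivity
  have h2 : (A/3) * (δ ^ 3)⁻¹ = A / (3 * δ ^ 3) := by field_simp
  linarith

lemma tail_bound {t : ℝ} (ht : 0 < t) (ht1 : t ≤ 1) (n : ℤ) {δ : ℝ} (hδ : 0 < δ) (hδp : δ ≤ Real.pi) :
    ‖∫ θ in δ..Real.pi, cf t θ * eit n θ‖ ≤ A0 * t ^ 6 / (3 * δ ^ 3) ∧
    ‖∫ θ in (-Real.pi)..(-δ), cf t θ * eit n θ‖ ≤ A0 * t ^ 6 / (3 * δ ^ 3) := by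
  have hA : 0 ≤ A0 * t ^ 6 := by have : 0 < A0 := by norm_num [A0]
                                 positivity
  have hb : ∀ θ, 0 < θ → θ ≤ Real.pi → ∀ θ', |θ'| = θ → ‖cf t θ' * eit n θ'‖ ≤ (A0 * t ^ 6) * θ⁻¹ ^ 4 := by
    intro θ h0 h1 θ' h2
    have := cf_decay ht ht1 (h2.le.trans h1)
    rw [norm_mul, eit_norm, mul_one, inv_pow, ← div_eq_mul_inv, le_div_iff₀ (by positivity), ← h2]
    have e : |θ'| ^ 4 = θ' ^ 4 := by
      rw [show |θ'| ^ 4 = (|θ'|^2)^2 by ring, sq_abs]; ring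
    rwa [e]
  have hci : IntervalIntegrable (fun θ : ℝ => (A0 * t ^ 6) * θ⁻¹ ^ 4) MeasureTheory.volume δ Real.pi := by
    apply ContinuousOn.intervalIntegrable
    intro θ hθ
    exact (((continuousAt_inv₀ (by
      rw [Set.uIcc_of_le hδp] at hθ; linarith [hθ.1])).pow 4).const_mul _ |>.continuousWithinAt)
  constructor
  · refine (intervalIntegral.norm_integral_le_of_norm_le hδp ?_ hci).trans (tail_int hδ hδp hA)
    filter_upwards with θ hθ
    have h0 : 0 < θ := hδ.trans hθ.1
    exact hb θ h0 hθ.2 θ (abs_of_pos h0)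
  · rw [← intervalIntegral.integral_comp_neg (fun θ => cf t θ * eit n θ)]
    refine (intervalIntegral.norm_integral_le_of_norm_le hδp ?_ hci).trans (tail_int hδ hδp hA)
    filter_upwards with θ hθ
    have h0 : 0 < θ := hδ.trans hθ.1
    exact hb θ h0 hθ.2 (-θ) (by rw [abs_neg]; exact abs_of_pos h0)

end SCCG


noncomputable section SCCH


open Complex

lemma mid_bound {t : ℝ} (ht : 0 < t) (n : ℤ) {δ s : ℝ} (hs : 0 < s) (hsδ : s ≤ δ)
    (hμ : |mom 1 t - n| * δ ≤ 1) :
    s * Real.exp (-(mom 2 t * s ^ 2 / 2)) - 8 * mom 3 t * δ ^ 4 ≤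
      (∫ θ in (-δ)..δ, cf t θ * eit (-n) θ).re := by
  have hm2 := mom_nonneg 2 t
  have hm3 := mom_nonneg 3 t
  have hδ : 0 < δ := hs.trans_le hsδ
  have hfc : Continuous fun θ => cf t θ * eit (-n) θ := (cf_cont ht).mul (eit_cont _)
  have hre : (∫ θ in (-δ)..δ, cf t θ * eit (-n) θ).re = ∫ θ in (-δ)..δ, (cf t θ * eit (-n) θ).re :=
    (Complex.reCLM.intervalIntegral_comp_comm (hfc.intervalIntegrable _ _)).symm
  have hpt : ∀ θ ∈ Set.Icc (-δ) δ, (1/2) * Real.exp (-(mom 2 t * θ ^ 2 / 2)) - 4 * mom 3 t * δ ^ 3 ≤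
      (cf t θ * eit (-n) θ).re := by
    intro θ hθ
    have habs : |θ| ≤ δ := abs_le.2 hθ
    have hg := cf_gauss ht θ
    set G := Complex.exp (((mom 1 t * θ : ℝ):ℂ) * I - ((mom 2 t * θ ^ 2 / 2 : ℝ) : ℂ)) with hG
    have h1 : ‖cf t θ * eit (-n) θ - G * eit (-n) θ‖ ≤ 4 * mom 3 t * δ ^ 3 := by
      rw [← sub_mul, norm_mul, eit_norm, mul_one]
      refine hg.trans ?_
      gcongr
    have h2 : (G * eit (-n) θ).re = Real.exp (-(mom 2 t * θ ^ 2 / 2)) * Real.cos ((mom 1 t - n) * θ) := by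
      rw [hG, eit, ← Complex.exp_add]
      have e : (((mom 1 t * θ : ℝ):ℂ) * I - ((mom 2 t * θ ^ 2 / 2 : ℝ) : ℂ)) + (((-n : ℤ) * θ : ℝ) : ℂ) * I =
        ((-(mom 2 t * θ ^ 2 / 2) : ℝ) : ℂ) + (((mom 1 t - n) * θ : ℝ) : ℂ) * I := by push_cast; ring
      rw [e, Complex.exp_add, ← Complex.ofReal_exp, Complex.re_ofReal_mul, Complex.exp_ofReal_mul_I_re]
    have h3 : 1/2 ≤ Real.cos ((mom 1 t - n) * θ) := by
      have h4 : |(mom 1 t - n) * θ| ≤ 1 := by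
        rw [abs_mul]; refine le_trans ?_ hμ; gcongr
      have h5 := Real.one_sub_sq_div_two_le_cos (x := (mom 1 t - n) * θ)
      have h6 : ((mom 1 t - n) * θ)^2 ≤ 1 := by rw [← sq_abs]; exact pow_le_one₀ (abs_nonneg _) h4
      linarith
    have h7 := (abs_le.1 ((Complex.abs_re_le_norm _).trans h1)).1
    rw [Complex.sub_re, h2] at h7
    have h8 : Real.exp (-(mom 2 t * θ ^ 2 / 2)) * (1/2) ≤ Real.exp (-(mom 2 t * θ ^ 2 / 2)) * Real.cos ((mom 1 t - n) * θ) := by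
      gcongr
    linarith
  have hec : Continuous fun θ : ℝ => (1/2) * Real.exp (-(mom 2 t * θ ^ 2 / 2)) := by fun_prop
  have hi1 : ∫ θ in (-δ)..δ, ((1/2) * Real.exp (-(mom 2 t * θ ^ 2 / 2)) - 4 * mom 3 t * δ ^ 3) ≤
      ∫ θ in (-δ)..δ, (cf t θ * eit (-n) θ).re := by
    apply intervalIntegral.integral_mono_on (by linarith) _ _ hpt
    · exact (hec.sub continuous_const).intervalIntegrable _ _
    · exact (Complex.continuous_re.comp hfc).intervalIntegrable _ _
  rw [intervalIntegral.integral_sub (hec.intervalIntegrable _ _) (continuous_const.intervalIntegrable _ _),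
    intervalIntegral.integral_const] at hi1
  have hi2 : ∫ θ in (-s)..s, (1/2) * Real.exp (-(mom 2 t * θ ^ 2 / 2)) ≤
      ∫ θ in (-δ)..δ, (1/2) * Real.exp (-(mom 2 t * θ ^ 2 / 2)) := by
    apply intervalIntegral.integral_mono_interval (by linarith) (by linarith) hsδ
    · filter_upwards with θ
      simp only [Pi.zero_apply]; positivity
    · exact hec.intervalIntegrable _ _
  have hi3 : ∫ θ in (-s)..s, (1/2) * Real.exp (-(mom 2 t * s ^ 2 / 2)) ≤
      ∫ θ in (-s)..s, (1/2) * Real.exp (-(mom 2 t * θ ^ 2 / 2)) := by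
    apply intervalIntegral.integral_mono_on (by linarith) (continuous_const.intervalIntegrable _ _)
      (hec.intervalIntegrable _ _)
    intro θ hθ
    have : θ ^ 2 ≤ s ^ 2 := by rw [← sq_abs]; gcongr; exact abs_le.2 hθ
    gcongr
  rw [intervalIntegral.integral_const] at hi3
  simp only [smul_eq_mul] at hi1 hi3
  rw [hre]
  have e1 : (s - -s) * (1/2 * Real.exp (-(mom 2 t * s ^ 2 / 2))) = s * Real.exp (-(mom 2 t * s ^ 2 / 2)) := by ring
  have e2 : (δ - -δ) * (4 * mom 3 t * δ ^ 3) = 8 * mom 3 t * δ ^ 4 := by ring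
  linarith

lemma ww_lower_aux {t : ℝ} (ht : 0 < t) (ht1 : t ≤ 1) (n : ℤ) {δ s : ℝ} (hs : 0 < s) (hsδ : s ≤ δ)
    (hδp : δ ≤ Real.pi) (hμ : |mom 1 t - n| * δ ≤ 1) :
    s * Real.exp (-(mom 2 t * s ^ 2 / 2)) - 8 * mom 3 t * δ ^ 4 - 2 * (A0 * t ^ 6 / (3 * δ ^ 3)) ≤
      2 * Real.pi * ww t n := by
  have hδ : 0 < δ := hs.trans_le hsδ
  have h1 := mid_bound ht n hs hsδ hμ
  obtain ⟨h2, h3⟩ := tail_bound ht ht1 (-n) hδ hδp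
  have hfc : Continuous fun θ => cf t θ * eit (-n) θ := (cf_cont ht).mul (eit_cont _)
  have hi : ∀ a b, IntervalIntegrable (fun θ => cf t θ * eit (-n) θ) MeasureTheory.volume a b :=
    fun a b => hfc.intervalIntegrable a b
  have h4 := fourier_inv ht n
  rw [← intervalIntegral.integral_add_adjacent_intervals (hi (-Real.pi) (-δ)) (hi (-δ) Real.pi),
    ← intervalIntegral.integral_add_adjacent_intervals (hi (-δ) δ) (hi δ Real.pi)] at h4
  have h5 := congrArg Complex.re h4
  rw [Complex.add_re, Complex.add_re, Complex.ofReal_re] at h5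
  have h6 := (abs_le.1 ((Complex.abs_re_le_norm _).trans h2)).1
  have h7 := (abs_le.1 ((Complex.abs_re_le_norm _).trans h3)).1
  linarith

open Filter Topology in
lemma ww_lower : ∃ c > (0:ℝ), ∀ᶠ t : ℝ in 𝓝[>] 0, ∀ n : ℕ, (n:ℝ) = Real.pi ^ 2 / (6 * t ^ 2) →
    c * ss t ≤ ww t n := by
  obtain ⟨C5, hC5, hmean⟩ := mean_bound
  set C2 : ℝ := 2 ^ (2+1) * (Nat.factorial 2) * (Real.pi ^ 2 / 6) with hC2
  set C3 : ℝ := 2 ^ (3+1) * (Nat.factorial 3) * (Real.pi ^ 2 / 6) with hC3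
  have hC3p : 0 < C3 := by positivity
  set c0 := Real.exp (-(C2 / 2)) with hc0
  have hc0p : 0 < c0 := Real.exp_pos _
  have hA : 0 < A0 := by norm_num [A0]
  set K := 1 + 4 * A0 / c0 with hK
  have hK1 : 1 ≤ K := by have : 0 < 4 * A0 / c0 := by positivity
                         linarith
  have hKp : 0 < K := by linarith
  refine ⟨c0 / 4 / Real.pi, by positivity, ?_⟩
  have hpos : ∀ᶠ t : ℝ in 𝓝[>] 0, 0 < t := eventually_mem_nhdsWithin
  have hle : ∀ {f : ℝ → ℝ} {b : ℝ}, ContinuousAt f 0 → f 0 = 0 → 0 < b → ∀ᶠ t : ℝ in 𝓝[>] 0, f t ≤ b := by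
    intro f b hf h0 hb
    have : Tendsto f (𝓝[>] 0) (𝓝 0) := by
      have := hf.tendsto; rw [h0] at this; exact this.mono_left nhdsWithin_le_nhds
    exact (this.eventually (gt_mem_nhds hb)).mono fun t ht => ht.le
  have e1 : ∀ᶠ t : ℝ in 𝓝[>] 0, t ≤ 1 := hle (f := fun t => t) continuousAt_id rfl one_pos
  have e2 : ∀ᶠ t : ℝ in 𝓝[>] 0, 8 * C3 * K ^ 4 * Real.sqrt t ≤ c0 / 4 :=
    hle (by fun_prop) (by simp) (by positivity)
  have e3 : ∀ᶠ t : ℝ in 𝓝[>] 0, K * (t * Real.sqrt t) ≤ Real.pi :=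
    hle (by fun_prop) (by simp) Real.pi_pos
  have e4 : ∀ᶠ t : ℝ in 𝓝[>] 0, C5 * K * t ^ (1/4 : ℝ) ≤ 1 :=
    hle (by
      refine continuousAt_const.mul ?_
      exact (Real.continuousAt_rpow_const 0 (1/4) (Or.inr (by norm_num)))) (by
      rw [Real.zero_rpow (by norm_num)]; simp) one_pos
  filter_upwards [hpos, e1, e2, e3, e4] with t ht h1 h2 h3 h4 n hn
  have hs := ss_pos ht
  have hsq := ss_sq ht
  have hs4 : ss t ^ 4 = t ^ 6 := by
    calc ss t ^ 4 = (ss t ^ 2) ^ 2 := by ring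
      _ = _ := by rw [hsq]; ring
  have hμ : |mom 1 t - (n:ℤ)| * (K * ss t) ≤ 1 := by
    have := hmean t ht
    rw [← hn, abs_sub_comm] at this
    have e : ss t = t ^ (3/2 : ℝ) := by
      rw [ss, Real.sqrt_eq_rpow, show (3/2 : ℝ) = 1 + 1/2 by norm_num, Real.rpow_add ht, Real.rpow_one]
    have e' : t ^ (-(5/4) : ℝ) * ss t = t ^ (1/4 : ℝ) := by
      rw [e, ← Real.rpow_add ht]; norm_num
    push_cast
    calc |mom 1 t - n| * (K * ss t) ≤ (C5 * t ^ (-(5/4) : ℝ)) * (K * ss t) := by gcongr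
      _ = C5 * K * (t ^ (-(5/4) : ℝ) * ss t) := by ring
      _ ≤ 1 := by rw [e']; exact h4
  have key := ww_lower_aux ht h1 n hs (δ := K * ss t) (by nlinarith) h3 hμ
  have b2 : mom 2 t * ss t ^ 2 / 2 ≤ C2 / 2 := by
    have := mom_bound ht 2
    rw [hsq]
    have h : mom 2 t * t ^ 3 ≤ C2 := by
      rw [← le_div_iff₀ (by positivity)]; exact this
    linarith
  have b2' : c0 ≤ Real.exp (-(mom 2 t * ss t ^ 2 / 2)) := by
    rw [hc0]; gcongr
  have b3 : 8 * mom 3 t * (K * ss t) ^ 4 ≤ ss t * (c0 / 4) := by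
    have := mom_bound ht 3
    have h : mom 3 t * t ^ 4 ≤ C3 := by
      rw [← le_div_iff₀ (by positivity)]; exact this
    have e : t ^ 2 = ss t * Real.sqrt t := by
      rw [ss, mul_assoc, Real.mul_self_sqrt ht.le]; ring
    calc 8 * mom 3 t * (K * ss t) ^ 4 = 8 * (mom 3 t * t ^ 4) * K ^ 4 * t ^ 2 := by
          rw [mul_pow, hs4]; ring
      _ ≤ 8 * C3 * K ^ 4 * t ^ 2 := by gcongr
      _ = ss t * (8 * C3 * K ^ 4 * Real.sqrt t) := by rw [e]; ring
      _ ≤ _ := by gcongr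
  have b4 : 2 * (A0 * t ^ 6 / (3 * (K * ss t) ^ 3)) ≤ ss t * (c0 / 4) := by
    have e : 2 * (A0 * t ^ 6 / (3 * (K * ss t) ^ 3)) = ss t * (2 * A0 / (3 * K ^ 3)) := by
      rw [← hs4]; field_simp
    rw [e]
    apply mul_le_mul_of_nonneg_left _ hs.le
    rw [div_le_div_iff₀ (by positivity) (by norm_num)]
    have hKK : K ≤ K ^ 3 := by nlinarith [sq_nonneg K, sq_nonneg (K-1)]
    have : 4 * A0 ≤ c0 * K := by
      rw [hK, mul_add, mul_div_cancel₀ _ hc0p.ne']; linarith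
    nlinarith
  have hp := Real.pi_pos
  have b1 : ss t * c0 ≤ ss t * Real.exp (-(mom 2 t * ss t ^ 2 / 2)) := by gcongr
  have fin : ss t * (c0 / 2) ≤ 2 * Real.pi * ww t n := by linarith
  have : c0 / 4 / Real.pi * ss t = (ss t * (c0 / 2)) / (2 * Real.pi) := by field_simp; norm_num
  rw [this, div_le_iff₀ (by positivity)]
  linarith
end SCCH


noncomputable section SCCI



lemma lip_one {a : ℕ → ℝ} {D : ℝ} (ha0 : a 0 = 1) (hD : ∀ j, |a j - a (j+1)| ≤ D) (j : ℕ) :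
    |a j - 1| ≤ j * D := by
  induction j with
  | zero => simp [ha0]
  | succ j ih =>
    have h := abs_sub_le (a (j+1)) (a j) 1
    have h2 := hD j
    rw [abs_sub_comm] at h2
    push_cast
    linarith

def gg (a : ℕ → ℝ) (t : ℝ) (j : ℕ) : ℝ := Real.exp (-(j * t)) * (a j - 1)
def HH (C t : ℝ) (j : ℕ) : ℝ := C * Real.exp (-(j * t) / 2)

lemma gg_step {a : ℕ → ℝ} {D t : ℝ} (ha0 : a 0 = 1) (hD : ∀ j, |a j - a (j+1)| ≤ D) (ht : 0 < t)
    (ht1 : t ≤ 1) (j : ℕ) : |gg a t j - gg a t (j+1)| ≤ HH (8 * D / t) t j - HH (8 * D / t) t (j+1) := by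
  have hD0 : 0 ≤ D := (abs_nonneg _).trans (hD 0)
  have h1 := lip_one ha0 hD j
  have e1 : Real.exp (-(((j+1 : ℕ):ℝ) * t)) = Real.exp (-(j * t)) * Real.exp (-t) := by
    rw [← Real.exp_add]; congr 1; push_cast; ring
  have e2 : Real.exp (-(((j+1 : ℕ):ℝ) * t) / 2) = Real.exp (-(j * t) / 2) * Real.exp (-(t/2)) := by
    rw [← Real.exp_add]; congr 1; push_cast; ring
  have e3 : Real.exp (-(j * t)) = Real.exp (-(j * t) / 2) * Real.exp (-(j * t) / 2) := by
    rw [← Real.exp_add]; congr 1; ring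
  have e4 : Real.exp (-(j * t) / 2) * Real.exp (j * t / 2) = 1 := by
    rw [← Real.exp_add, neg_div, neg_add_cancel, Real.exp_zero]
  have hx := Real.exp_pos (-(j * t) / 2)
  have hy := Real.add_one_le_exp (j * t / 2)
  have hjt : 0 ≤ (j:ℝ) * t := by positivity
  have ht0 := Real.exp_pos (-t)
  have ht2 : Real.exp (-t) ≤ 1 := Real.exp_le_one_iff.2 (by linarith)
  have ht3 : 1 - t ≤ Real.exp (-t) := by linarith [Real.add_one_le_exp (-t)]
  have ht4 : Real.exp (-(t/2)) ≤ 1 - t / 4 := by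
    have h5 : Real.exp (-(t/2)) * Real.exp (t/2) = 1 := by rw [← Real.exp_add]; simp
    have h6 := Real.add_one_le_exp (t/2)
    have h7 := Real.exp_pos (-(t/2))
    have h8 : Real.exp (-(t/2)) * (t/2 + 1) ≤ 1 := le_trans (by gcongr) h5.le
    nlinarith
  have hg : gg a t j - gg a t (j+1) = Real.exp (-(j * t)) *
      ((a j - a (j+1)) * Real.exp (-t) + (1 - Real.exp (-t)) * (a j - 1)) := by
    rw [gg, gg, e1]; ring
  have b1 : |(a j - a (j+1)) * Real.exp (-t) + (1 - Real.exp (-t)) * (a j - 1)| ≤ D * (1 + j * t) := by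
    refine (abs_add_le _ _).trans ?_
    rw [abs_mul, abs_mul, abs_of_pos ht0, abs_of_nonneg (by linarith : 0 ≤ 1 - Real.exp (-t))]
    calc _ ≤ D * 1 + t * (j * D) := by
          gcongr
          · exact hD j
          · linarith
      _ = _ := by ring
  rw [hg, abs_mul, abs_of_pos (Real.exp_pos _)]
  calc _ ≤ Real.exp (-(j * t)) * (D * (1 + j * t)) := by gcongr
    _ ≤ D * 2 * Real.exp (-(j * t) / 2) := by
        rw [e3]
        set X := Real.exp (-(j * t) / 2)
        have : X * (1 + j * t) ≤ 2 := by
          calc X * (1 + j * t) ≤ X * (2 * Real.exp (j * t / 2)) := by gcongr; linarith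
            _ = 2 * (X * Real.exp (j * t / 2)) := by ring
            _ = 2 := by rw [e4]; norm_num
        calc X * X * (D * (1 + j * t)) = D * X * (X * (1 + j * t)) := by ring
          _ ≤ D * X * 2 := by gcongr
          _ = _ := by ring
    _ = (8 * D / t) * Real.exp (-(j * t) / 2) * (t / 4) := by field_simp; ring
    _ ≤ (8 * D / t) * Real.exp (-(j * t) / 2) * (1 - Real.exp (-(t/2))) := by
        gcongr; linarith
    _ = _ := by rw [HH, HH, e2]; ring

lemma gg_le {a : ℕ → ℝ} {D t : ℝ} (ha0 : a 0 = 1) (hD : ∀ j, |a j - a (j+1)| ≤ D) (ht : 0 < t)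
    (ht1 : t ≤ 1) {i j : ℕ} (hij : i ≤ j) :
    |gg a t i - gg a t j| ≤ HH (8 * D / t) t i - HH (8 * D / t) t j := by
  induction j, hij using Nat.le_induction with
  | base => simp
  | succ j hij ih =>
    have := gg_step ha0 hD ht ht1 j
    have h := abs_sub_le (gg a t i) (gg a t j) (gg a t (j+1))
    linarith

lemma Q_le (n ℓ : ℕ) : Q1 n ℓ ≤ Q2 n ℓ ∧ Q2 n ℓ ≤ Q1 (n+1) ℓ := by
  unfold Q2 Q1
  constructor
  · omega
  · nlinarith

lemma gg_sum {a : ℕ → ℝ} {D t : ℝ} (ha0 : a 0 = 1) (hD : ∀ j, |a j - a (j+1)| ≤ D) (ht : 0 < t)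
    (ht1 : t ≤ 1) (ℓ k : ℕ) :
    |∑ n ∈ Finset.range k, (gg a t (Q1 n ℓ) - gg a t (Q2 n ℓ))| ≤ 8 * D / t := by
  have hD0 : 0 ≤ D := (abs_nonneg _).trans (hD 0)
  have key : ∑ n ∈ Finset.range k, |gg a t (Q1 n ℓ) - gg a t (Q2 n ℓ)| ≤
      HH (8 * D / t) t 0 - HH (8 * D / t) t (Q1 k ℓ) := by
    induction k with
    | zero => simp [Q1]
    | succ k ih =>
      rw [Finset.sum_range_succ]
      have h1 := gg_le ha0 hD ht ht1 (Q_le k ℓ).1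
      have h2 := (abs_nonneg _).trans (gg_le ha0 hD ht ht1 (Q_le k ℓ).2)
      linarith
  refine (Finset.abs_sum_le_sum_abs _ _).trans (key.trans ?_)
  have : 0 ≤ HH (8 * D / t) t (Q1 k ℓ) := by unfold HH; positivity
  have h0 : HH (8 * D / t) t 0 = 8 * D / t := by simp [HH]
  linarith

lemma exp_Q_summable {t : ℝ} (ht : 0 < t) {Q : ℕ → ℕ} (hQ : ∀ n, n ≤ Q n) :
    Summable fun n => Real.exp (-(Q n * t)) := by
  refine Summable.of_nonneg_of_le (fun n => (Real.exp_pos _).le) (fun n => ?_)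
    (summable_geometric_of_lt_one (Real.exp_pos (-t)).le (by rw [Real.exp_lt_one_iff]; linarith))
  rw [← Real.exp_nat_mul]
  have : (n:ℝ) ≤ Q n := by exact_mod_cast hQ n
  gcongr
  nlinarith

open Filter Topology in
lemma final_bound_s10 {t : ℝ} (ht : 0 < t) (ht1 : t ≤ 1) {c : ℝ} (hc : 0 < c) (N ℓ : ℕ)
    (hw : c * ss t ≤ ww t N) :
    |(Vd ℓ (N + ℓ * (ℓ + 1) / 2) : ℝ) / (partitionCount (N : ℤ) : ℝ) -
          ∑' n : ℕ, (Real.exp (-(Q1 n ℓ * t)) - Real.exp (-(Q2 n ℓ * t)))| ≤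
      8 * (2 * (A0 + 1) / c) * Real.sqrt t := by
  have hs := ss_pos ht
  have hwp : 0 < ww t N := lt_of_lt_of_le (by positivity) hw
  have hPP := PP_pos ht
  have hpN : (partitionCount (N:ℤ) : ℝ) ≠ 0 := by
    intro h; rw [ww, h] at hwp; simp at hwp
  have hA : 0 < A0 := by norm_num [A0]
  set a : ℕ → ℝ := fun j => ww t ((N:ℤ) - j) / ww t N with ha
  have ha0 : a 0 = 1 := by simp [ha, hwp.ne']
  have hD : ∀ j, |a j - a (j+1)| ≤ (2 * (A0 + 1) / c) * ss t := by
    intro j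
    have h := ww_lip ht ht1 ((N:ℤ) - j)
    have e : a j - a (j+1) = (ww t ((N:ℤ) - j) - ww t ((N:ℤ) - j - 1)) / ww t N := by
      simp only [ha]
      rw [show ((N:ℤ) - ((j+1 : ℕ):ℤ)) = (N:ℤ) - j - 1 by push_cast; ring]
      ring
    rw [e, abs_div, abs_of_pos hwp, div_le_iff₀ hwp]
    refine h.trans ?_
    calc 2 * (A0 + 1) * t ^ 3 = (2 * (A0 + 1) / c) * ss t * (c * ss t) := by
          rw [← ss_sq ht]; field_simp
      _ ≤ _ := by gcongr
  have hratio : ∀ j : ℕ, (partitionCount ((N:ℤ) - j) : ℝ) / partitionCount (N:ℤ) =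
      gg a t j + Real.exp (-(j * t)) := by
    intro j
    have : gg a t j + Real.exp (-(j * t)) = Real.exp (-(j * t)) * a j := by rw [gg]; ring
    rw [this, ha]
    simp only [ww]
    have e : Real.exp (-((((N:ℤ) - j : ℤ):ℝ) * t)) = Real.exp (-(((N:ℤ):ℝ) * t)) * Real.exp (j * t) := by
      rw [← Real.exp_add]; congr 1; push_cast; ring
    have e4 : Real.exp (-(j * t)) * Real.exp (j * t) = 1 := by
      rw [← Real.exp_add]; simp
    rw [e]
    have hx := Real.exp_pos (-(((N:ℤ):ℝ) * t))
    field_simp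
    linear_combination (-(partitionCount ((N:ℤ) - j) : ℝ)) * e4
  have hsum : Summable fun n : ℕ => (Real.exp (-(Q1 n ℓ * t)) - Real.exp (-(Q2 n ℓ * t))) := by
    apply Summable.sub
    · exact exp_Q_summable ht (Q := fun n => Q1 n ℓ) (fun n => by unfold Q1; nlinarith)
    · exact exp_Q_summable ht (Q := fun n => Q2 n ℓ) (fun n => by unfold Q2; omega)
  have hlim := hsum.hasSum.tendsto_sum_nat
  have hlim2 := (hlim.const_sub ((Vd ℓ (N + ℓ * (ℓ + 1) / 2) : ℝ) / (partitionCount (N : ℤ) : ℝ))).abs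
  refine le_of_tendsto hlim2 ?_
  filter_upwards [eventually_gt_atTop N] with k hk
  have hV : (Vd ℓ (N + ℓ * (ℓ + 1) / 2) : ℝ) = ∑ n ∈ Finset.range k,
      ((partitionCount ((N:ℤ) - Q1 n ℓ) : ℝ) - partitionCount ((N:ℤ) - Q2 n ℓ)) := by
    have := Vd_formula ℓ N k hk
    exact_mod_cast congrArg (fun z : ℤ => (z : ℝ)) this
  have hfin : (Vd ℓ (N + ℓ * (ℓ + 1) / 2) : ℝ) / (partitionCount (N : ℤ) : ℝ) -
      ∑ n ∈ Finset.range k, (Real.exp (-(Q1 n ℓ * t)) - Real.exp (-(Q2 n ℓ * t))) =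
      ∑ n ∈ Finset.range k, (gg a t (Q1 n ℓ) - gg a t (Q2 n ℓ)) := by
    rw [hV, Finset.sum_div, ← Finset.sum_sub_distrib]
    apply Finset.sum_congr rfl
    intro n _
    rw [sub_div, hratio, hratio]; ring
  rw [hfin]
  refine (gg_sum ha0 hD ht ht1 ℓ k).trans (le_of_eq ?_)
  rw [ss]; field_simp

end SCCI


theorem stmt_10 :
    ∃ C > (0 : ℝ), ∃ N₀ : ℕ, ∀ N : ℕ, N₀ ≤ N → ∀ ℓ : ℕ,
      (ℓ : ℝ) ≤ Real.sqrt N * (Real.log N) ^ 2 →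
      |(Vd ℓ (N + ℓ * (ℓ + 1) / 2) : ℝ) / (partitionCount (N : ℤ) : ℝ) -
          ∑' n : ℕ,
            (Real.exp (-(2 * π / Real.sqrt 6) * (Q1 n ℓ : ℝ) / (2 * Real.sqrt N)) -
              Real.exp (-(2 * π / Real.sqrt 6) * (Q2 n ℓ : ℝ) / (2 * Real.sqrt N)))| ≤
        C * (N : ℝ) ^ (-(1 / 5) : ℝ) := by
  obtain ⟨c, hc, hw⟩ := ww_lower
  have hA : 0 < A0 := by norm_num [A0]
  have hτ : Filter.Tendsto (fun N : ℕ => (2 * π / Real.sqrt 6) / (2 * Real.sqrt N)) Filter.atTop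
      (nhdsWithin 0 (Set.Ioi 0)) := by
    rw [tendsto_nhdsWithin_iff]
    constructor
    · apply Filter.Tendsto.const_div_atTop
      apply Filter.Tendsto.const_mul_atTop (by norm_num)
      exact Real.tendsto_sqrt_atTop.comp tendsto_natCast_atTop_atTop
    · filter_upwards [Filter.eventually_gt_atTop 0] with N hN
      have : (0:ℝ) < N := by exact_mod_cast hN
      have := Real.pi_pos
      simp only [Set.mem_Ioi]
      positivity
  have hle1 : ∀ᶠ t : ℝ in nhdsWithin 0 (Set.Ioi 0), t < 1 :=
    Filter.Eventually.filter_mono nhdsWithin_le_nhds (gt_mem_nhds one_pos)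
  obtain ⟨N₀, hN₀⟩ := Filter.eventually_atTop.1 ((hτ.eventually (hw.and hle1)).and
    (Filter.eventually_gt_atTop 0))
  refine ⟨8 * (2 * (A0 + 1) / c) * 2, by positivity, N₀, ?_⟩
  intro N hN ℓ _
  obtain ⟨⟨h1, h2⟩, h3⟩ := hN₀ N hN
  have hNp : (0:ℝ) < N := by exact_mod_cast h3
  have hN1 : (1:ℝ) ≤ N := by exact_mod_cast h3
  have hp := Real.pi_pos
  set t := (2 * π / Real.sqrt 6) / (2 * Real.sqrt N) with ht
  have htp : 0 < t := by positivity
  have hNt : (N:ℝ) = π ^ 2 / (6 * t ^ 2) := by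
    rw [ht, div_pow, div_pow, mul_pow, mul_pow, Real.sq_sqrt hNp.le, Real.sq_sqrt (by norm_num : (0:ℝ) ≤ 6)]
    field_simp
  have hb := final_bound_s10 htp h2.le hc N ℓ (h1 N hNt)
  have e : ∀ Q : ℝ, -(2 * π / Real.sqrt 6) * Q / (2 * Real.sqrt N) = -(Q * t) := by
    intro Q; rw [ht]; ring
  simp_rw [e]
  refine hb.trans ?_
  rw [mul_assoc (8 * (2 * (A0 + 1) / c))]
  apply mul_le_mul_of_nonneg_left _ (by positivity)
  have hs6 : 2 ≤ Real.sqrt 6 := Real.le_sqrt_of_sq_le (by norm_num)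
  have ht4 : t ≤ 4 * (N:ℝ) ^ (-(1/2) : ℝ) := by
    rw [ht, Real.rpow_neg hNp.le, ← Real.sqrt_eq_rpow, div_div, div_le_iff₀ (by positivity)]
    have hsN : 0 < Real.sqrt N := by positivity
    have : 4 * (Real.sqrt N)⁻¹ * (Real.sqrt 6 * (2 * Real.sqrt N)) = 8 * Real.sqrt 6 := by field_simp; norm_num
    rw [this]
    linarith [Real.pi_lt_d2]
  calc Real.sqrt t ≤ Real.sqrt (4 * (N:ℝ) ^ (-(1/2) : ℝ)) := Real.sqrt_le_sqrt ht4
    _ = 2 * (N:ℝ) ^ (-(1/4) : ℝ) := by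
      rw [Real.sqrt_mul (by norm_num), show (4:ℝ) = 2 ^ 2 by norm_num, Real.sqrt_sq (by norm_num),
        Real.sqrt_eq_rpow, ← Real.rpow_mul hNp.le]
      norm_num
    _ ≤ 2 * (N:ℝ) ^ (-(1/5) : ℝ) := by
      gcongr
      norm_num
end

section
/- Let B = 2π/√6, and for integers n ≥ 0 and ℓ ≥ 0 let Q₁(n, ℓ) = 2n(3n + 1) + 3nℓ and Q₂(n, ℓ) = Q₁(n, ℓ) + 8n + 4 + 2ℓ. There exist constants C > 0 and N₀ such that for all integers N ≥ N₀ and all integers ℓ with 0 ≤ ℓ ≤ N^{3/8}, the sum I_M = Σ_{n≥0} (e^{−B·Q₁(n,ℓ)/(2√N)} − e^{−B·Q₂(n,ℓ)/(2√N)}) satisfies |I_M − 2/3| ≤ C·N^{−1/10}. -/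
open Real

lemma aux_exp_le {x : ℝ} (hx : 0 ≤ x) : exp (-x) ≤ 1 / (1 + x) := by
  rw [exp_neg, ← one_div]
  apply one_div_le_one_div_of_le (by linarith)
  linarith [add_one_le_exp x]

lemma aux_upper {x : ℝ} (hx : 0 ≤ x) : exp (-x) ≤ 1 - x + x ^ 2 := by
  refine (aux_exp_le hx).trans ?_
  rw [div_le_iff₀ (by linarith)]
  nlinarith [pow_nonneg hx 3]

lemma aux_geom {y : ℝ} (hy : 0 ≤ y) :
    ∃ s, HasSum (fun n : ℕ => y ^ 2 * exp (-(y * n))) s ∧ s ≤ y * (1 + y) := by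
  rcases hy.eq_or_lt with h | h
  · subst h
    exact ⟨0, by simp, by simp⟩
  · have h1 : exp (-y) < 1 := by rw [exp_lt_one_iff]; linarith
    have hs := (hasSum_geometric_of_lt_one (exp_pos (-y)).le h1).mul_left (y ^ 2)
    refine ⟨y ^ 2 * (1 - exp (-y))⁻¹, ?_, ?_⟩
    · have e : (fun n : ℕ => y ^ 2 * exp (-(y * n))) = fun n : ℕ => y ^ 2 * exp (-y) ^ n := by
        funext n
        rw [← exp_nat_mul]
        congr 2
        ring
      rw [e]
      exact hs
    · have h2 := aux_exp_le hy
      rw [le_div_iff₀ (by linarith)] at h2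
      rw [← div_eq_mul_inv, div_le_iff₀ (by linarith)]
      nlinarith

lemma aux_bracket {a p q : ℝ} (ha : 0 ≤ a) (hp : 0 ≤ p) (hq : 0 ≤ q)
    (h : p = 2 / 3 * q - 4 / 3 * a) :
    |(1 - exp (-p)) - 2 / 3 * (1 - exp (-q))| ≤ 4 / 3 * a + q ^ 2 := by
  have h1 := aux_upper hp
  have h2 := aux_upper hq
  have h3 := add_one_le_exp (-p)
  have h4 := add_one_le_exp (-q)
  have h5 : p ^ 2 ≤ q ^ 2 := by
    apply pow_le_pow_left₀ hp; linarith
  rw [abs_le]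
  constructor <;> nlinarith [sq_nonneg q]

lemma Q1_cast (n l : ℕ) : (Q1 n l : ℝ) = 6 * (n:ℝ) ^ 2 + 2 * n + 3 * n * l := by
  simp only [Q1]; push_cast; ring

lemma Q2_cast (n l : ℕ) : (Q2 n l : ℝ) = Q1 n l + (8 * n + 4 + 2 * l) := by
  simp only [Q2]; push_cast; ring

lemma aux_tel {a : ℝ} (ha : 0 < a) (l : ℕ) :
    HasSum (fun n : ℕ => exp (-(a * Q1 n l)) - exp (-(a * Q1 (n + 1) l))) 1 := by
  rw [hasSum_iff_tendsto_nat_of_nonneg]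
  · have : ∀ n : ℕ, ∑ i ∈ Finset.range n,
        (exp (-(a * Q1 i l)) - exp (-(a * Q1 (i + 1) l))) = 1 - exp (-(a * Q1 n l)) := by
      intro n
      rw [Finset.sum_range_sub' (fun n : ℕ => exp (-(a * Q1 n l)))]
      simp [Q1]
    simp_rw [this]
    have h0 : Filter.Tendsto (fun n : ℕ => exp (-(a * Q1 n l))) Filter.atTop (nhds 0) := by
      have hg := tendsto_pow_atTop_nhds_zero_of_lt_one (exp_pos (-a)).le
        (by rw [exp_lt_one_iff]; linarith)
      refine squeeze_zero (fun n => (exp_pos _).le) (fun n => ?_) hg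
      rw [← exp_nat_mul, exp_le_exp, Q1_cast]
      have : (0:ℝ) ≤ a * (6 * (n:ℝ) ^ 2 + n + 3 * n * l) := by positivity
      nlinarith
    simpa using h0.const_sub 1
  · intro n
    rw [sub_nonneg, exp_le_exp, Q1_cast, Q1_cast]
    push_cast
    have : (0:ℝ) ≤ a * (12 * n + 8 + 3 * l) := by positivity
    nlinarith

lemma aux_term {a : ℝ} (ha : 0 < a) (ha2 : a ≤ 2) (n l : ℕ) :
    ‖(exp (-(a * Q1 n l)) - exp (-(a * Q2 n l))) -
      2 / 3 * (exp (-(a * Q1 n l)) - exp (-(a * Q1 (n + 1) l)))‖ ≤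
    1800 * (√a ^ 2 * exp (-(√a * n))) + 2 * ((3 * a * l) ^ 2 * exp (-((3 * a * l) * n))) := by
  have hb : √a ^ 2 = a := sq_sqrt ha.le
  have hn : (0:ℝ) ≤ n := Nat.cast_nonneg n
  have hl : (0:ℝ) ≤ l := Nat.cast_nonneg l
  set p := a * (8 * n + 4 + 2 * (l:ℝ)) with hp
  set q := a * (12 * n + 8 + 3 * (l:ℝ)) with hq
  set E := exp (-(a * Q1 n l)) with hE
  have e2 : exp (-(a * Q2 n l)) = E * exp (-p) := by
    rw [hE, ← exp_add, Q2_cast, hp]; congr 1; ring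
  have e3 : exp (-(a * Q1 (n + 1) l)) = E * exp (-q) := by
    rw [hE, ← exp_add, Q1_cast, Q1_cast, hq]; congr 1; push_cast; ring
  rw [e2, e3, norm_eq_abs]
  have : (E - E * exp (-p)) - 2 / 3 * (E - E * exp (-q)) =
    E * ((1 - exp (-p)) - 2 / 3 * (1 - exp (-q))) := by ring
  have hE0 : 0 < E := exp_pos _
  rw [this, abs_mul, abs_of_pos hE0]
  have hbr := aux_bracket (a := a) (p := p) (q := q) ha.le (by positivity) (by positivity)
    (by rw [hp, hq]; ring)
  have hq2 : 4 / 3 * a + q ^ 2 ≤ 600 * a * (1 + a * n ^ 2) + 2 * (3 * a * l) ^ 2 := by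
    have h1 : q ^ 2 ≤ 2 * (a * (12 * n + 8)) ^ 2 + 2 * (3 * a * l) ^ 2 := by
      rw [hq]; nlinarith [sq_nonneg (a * (12 * n + 8) - 3 * a * l)]
    have h2 : (12 * (n:ℝ) + 8) ^ 2 ≤ 288 * n ^ 2 + 128 := by
      nlinarith [sq_nonneg (12 * (n:ℝ) - 8)]
    have h3 : (a * (12 * n + 8)) ^ 2 ≤ a ^ 2 * (288 * n ^ 2 + 128) := by
      rw [mul_pow]; gcongr
    have h4 : a ^ 2 ≤ 2 * a := by nlinarith
    have h5 : 0 ≤ a ^ 2 * (n:ℝ) ^ 2 := by positivity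
    nlinarith
  have hEy : E ≤ exp (-((3 * a * l) * n)) := by
    rw [hE, exp_le_exp, Q1_cast]
    have : (0:ℝ) ≤ a * (6 * (n:ℝ) ^ 2 + 2 * n) := by positivity
    nlinarith
  have hEb : E * (1 + a * n ^ 2) ≤ 3 * exp (-(√a * n)) := by
    have h1 : 1 + a * (n:ℝ) ^ 2 ≤ exp (a * n ^ 2) := by linarith [add_one_le_exp (a * (n:ℝ)^2)]
    calc E * (1 + a * n ^ 2) ≤ E * exp (a * n ^ 2) := by gcongr
      _ = exp (-(a * Q1 n l) + a * n ^ 2) := by rw [hE, exp_add]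
      _ ≤ exp (1 + -(√a * n)) := by
        rw [exp_le_exp, Q1_cast]
        have h6 : (0:ℝ) ≤ a * (2 * n + 3 * n * l) := by positivity
        have h7 : (√a * n) ^ 2 = a * n ^ 2 := by rw [mul_pow, hb]
        nlinarith [sq_nonneg (√a * n - 1)]
      _ = exp 1 * exp (-(√a * n)) := exp_add _ _
      _ ≤ 3 * exp (-(√a * n)) := by
        gcongr
        exact exp_one_lt_three.le
  calc E * _ ≤ E * (600 * a * (1 + a * n ^ 2) + 2 * (3 * a * l) ^ 2) := by
        gcongr; exact hbr.trans hq2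
    _ = 600 * a * (E * (1 + a * n ^ 2)) + 2 * ((3 * a * l) ^ 2 * E) := by ring
    _ ≤ 600 * a * (3 * exp (-(√a * n))) +
        2 * ((3 * a * l) ^ 2 * exp (-((3 * a * l) * n))) := by gcongr
    _ = _ := by rw [hb]; ring

lemma aux_main {a : ℝ} (ha : 0 < a) (ha2 : a ≤ 2) (l : ℕ) :
    |(∑' n : ℕ, (exp (-(a * Q1 n l)) - exp (-(a * Q2 n l)))) - 2 / 3| ≤
      1800 * (√a * (1 + √a)) + 2 * ((3 * a * l) * (1 + 3 * a * l)) := by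
  obtain ⟨s, hs, hs'⟩ := aux_geom (sqrt_nonneg a)
  obtain ⟨t, ht, ht'⟩ := aux_geom (y := 3 * a * l) (by positivity)
  have hB := (hs.mul_left 1800).add (ht.mul_left 2)
  have hbd := aux_term ha ha2 (l := l)
  have hsum := (Summable.of_norm_bounded hB.summable (fun n => hbd n)).hasSum
  have hle := tsum_of_norm_bounded hB (fun n => hbd n)
  have hf := hsum.add ((aux_tel ha l).mul_left (2 / 3))
  simp only [sub_add_cancel] at hf
  rw [hf.tsum_eq]
  rw [norm_eq_abs] at hle
  have e : ∀ x : ℝ, x + 2 / 3 * 1 - 2 / 3 = x := fun x => by ring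
  rw [e]
  linarith

theorem stmt_11 :
    ∃ C > (0 : ℝ), ∃ N₀ : ℕ, ∀ N : ℕ, N₀ ≤ N → ∀ ℓ : ℕ,
      (ℓ : ℝ) ≤ (N : ℝ) ^ ((3 : ℝ) / 8) →
      |(∑' n : ℕ,
          (Real.exp (-(2 * π / Real.sqrt 6) * (Q1 n ℓ : ℝ) / (2 * Real.sqrt N)) -
            Real.exp (-(2 * π / Real.sqrt 6) * (Q2 n ℓ : ℝ) / (2 * Real.sqrt N)))) -
          2 / 3| ≤
        C * (N : ℝ) ^ (-(1 / 10) : ℝ) := by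
  refine ⟨20000, by norm_num, 1, fun N hN l hl => ?_⟩
  have hN1 : (1:ℝ) ≤ N := by exact_mod_cast hN
  have hN0 : (0:ℝ) < N := by linarith
  set a : ℝ := (2 * π / √6) / (2 * √N) with ha
  have e : ∀ x : ℝ, -(2 * π / √6) * x / (2 * √N) = -(a * x) := fun x => by rw [ha]; ring
  simp_rw [e]
  have ha0 : 0 < a := by positivity
  have haN : a ≤ 2 * (N:ℝ) ^ (-(1/2) : ℝ) := by
    have h6 : (2:ℝ) ≤ √6 := by
      rw [show (2:ℝ) = √4 by rw [show (4:ℝ) = 2^2 by norm_num]; simp]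
      exact sqrt_le_sqrt (by norm_num)
    rw [rpow_neg hN0.le, ← sqrt_eq_rpow, ha]
    have : 2 * π / √6 ≤ 4 := by
      rw [div_le_iff₀ (by positivity)]; linarith [pi_le_four]
    calc 2 * π / √6 / (2 * √N) ≤ 4 / (2 * √N) := by gcongr
      _ = _ := by field_simp; norm_num
  have hmono : ∀ x : ℝ, x ≤ -(1/10) → (N:ℝ) ^ x ≤ (N:ℝ) ^ (-(1/10) : ℝ) :=
    fun x hx => rpow_le_rpow_of_exponent_le hN1 hx
  set T := (N:ℝ) ^ (-(1/10) : ℝ) with hT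
  have hT1 : T ≤ 1 := rpow_le_one_of_one_le_of_nonpos hN1 (by norm_num)
  have hT0 : 0 < T := by positivity
  have ha2 : a ≤ 2 := by
    have := hmono (-(1/2)) (by norm_num)
    linarith
  have hb : √a ≤ 2 * T := by
    have h1 : √a ≤ 2 * (N:ℝ) ^ (-(1/4) : ℝ) := by
      rw [sqrt_le_left (by positivity), mul_pow, ← rpow_natCast, ← rpow_natCast, ← rpow_mul hN0.le]
      norm_num at haN ⊢
      have : 0 < (N:ℝ) ^ (-(1/2) : ℝ) := by positivity
      norm_num at this
      linarith
    have := hmono (-(1/4)) (by norm_num)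
    linarith
  have hy : 3 * a * l ≤ 6 * T := by
    have h1 : 3 * a * l ≤ 3 * (2 * (N:ℝ) ^ (-(1/2) : ℝ)) * (N:ℝ) ^ ((3:ℝ)/8) := by gcongr
    have h2 : (N:ℝ) ^ (-(1/2) : ℝ) * (N:ℝ) ^ ((3:ℝ)/8) = (N:ℝ) ^ (-(1/8) : ℝ) := by
      rw [← rpow_add hN0]; norm_num
    have := hmono (-(1/8)) (by norm_num)
    nlinarith
  have hy0 : 0 ≤ 3 * a * l := by positivity
  refine (aux_main ha0 ha2 l).trans ?_
  have h1 : √a * (1 + √a) ≤ (2 * T) * (1 + 2) := by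
    gcongr; linarith
  have h2 : (3 * a * l) * (1 + 3 * a * l) ≤ (6 * T) * (1 + 6) := by
    gcongr; linarith
  linarith
end
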